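/- arXiv:1806.04901 — 4 statements merged into one kernel-verified Lean document; each statement's English description precedes it below -/
import Mathlib

section
/- Let 1 ≤ p < N and let Ω ⊆ ℝ^N be a domain. Then for every u ∈ C_c^∞(Ω), ((N−p)/p)^p · ∫_Ω |u(x)|^p / H⁰(x)^p dx ≤ ∫_Ω |(x/H⁰(x)) · ∇u(x)|^p dx. -/
/-!
The inequality is an instance of Hardy's averaging inequality on `ℝ^N`. Put
`g(y) = (y / H⁰(y)) · ∇u(y)`. As `y / H⁰(y)` is invariant under positive dilations, the
fundamental theorem of calculus along the ray through `x` gives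
`u(x) / H⁰(x) = -∫_1^∞ g(t x) dt` (`enorm_le_lintegral_ray`). The averaging operator on the right
has norm at most `p / (N - p)` on `L^p(ℝ^N)` (`lintegral_hardy`): with `c = (N - p) / p`, the
measure `ν = c t^{-N/p} dt` on `(1, ∞)` is a probability, so Jensen's inequality yields
`|u(x) / H⁰(x)|^p ≤ c^{-p} ∫ |g(t x)|^p t^N dν(t)`, and integrating in `x` absorbs the factor `t^N`.

Of the polar function only homogeneity, continuity and the lower bound `|x| ≤ b H⁰(x)` matter; the
last one makes the right-hand integral finite (`lintegral_radial_lt_top`), which allows the passage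
from Lebesgue integrals in `[0, ∞]` to Bochner integrals.
-/

open MeasureTheory Set Filter
open scoped RealInnerProductSpace Topology ENNReal NNReal

noncomputable section

/-- `ℝ^N` as a Euclidean space. -/
abbrev Euc (N : ℕ) := EuclideanSpace ℝ (Fin N)

/-- `H : ℝ^N → ℝ` is a Finsler norm: nonnegative, convex, `C²` away from the origin,
even and positively one-homogeneous, comparable to the Euclidean norm, and with
positive definite Hessian of `H²` away from the origin. -/
structure IsFinslerNorm {N : ℕ} (H : Euc N → ℝ) : Prop where
  nonneg : ∀ ξ, 0 ≤ H ξ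
  convexOn : ConvexOn ℝ Set.univ H
  smooth : ContDiffOn ℝ 2 H {(0 : Euc N)}ᶜ
  homog : ∀ (t : ℝ) (ξ : Euc N), H (t • ξ) = |t| * H ξ
  bounds : ∃ a b : ℝ, 0 < a ∧ a ≤ b ∧ ∀ ξ : Euc N, a * ‖ξ‖ ≤ H ξ ∧ H ξ ≤ b * ‖ξ‖
  hessPosDef : ∀ ξ : Euc N, ξ ≠ 0 → ∀ v : Euc N, v ≠ 0 →
    0 < iteratedFDeriv ℝ 2 (fun x => (H x) ^ 2) ξ ![v, v]

/-- The polar function `H⁰(x) = sup_{ξ ≠ 0} (ξ·x)/H(ξ)` of a Finsler norm. -/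
def polarNorm {N : ℕ} (H : Euc N → ℝ) (x : Euc N) : ℝ :=
  sSup {r : ℝ | ∃ ξ : Euc N, ξ ≠ 0 ∧ r = ⟪ξ, x⟫ / H ξ}

/-- `u ∈ C_c^∞(Ω)`: a smooth function with compact support contained in `Ω`. -/
def IsTestFun {N : ℕ} (Ω : Set (Euc N)) (u : Euc N → ℝ) : Prop :=
  ContDiff ℝ (⊤ : ℕ∞) u ∧ HasCompactSupport u ∧ tsupport u ⊆ Ω

/-! ### The polar function -/

section Polar

variable {N : ℕ} {H : Euc N → ℝ}

lemma polar_quotient_le {a : ℝ} (ha : 0 < a)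
    (hb : ∀ ξ : Euc N, a * ‖ξ‖ ≤ H ξ) (x : Euc N) {ξ : Euc N} (hξ : ξ ≠ 0) :
    ⟪ξ, x⟫ / H ξ ≤ a⁻¹ * ‖x‖ := by
  have hn : 0 < ‖ξ‖ := norm_pos_iff.2 hξ
  have hpos : 0 < H ξ := lt_of_lt_of_le (by positivity) (hb ξ)
  rw [div_le_iff₀ hpos]
  calc ⟪ξ, x⟫ ≤ ‖ξ‖ * ‖x‖ := real_inner_le_norm _ _
    _ = a⁻¹ * ‖x‖ * (a * ‖ξ‖) := by field_simp
    _ ≤ a⁻¹ * ‖x‖ * H ξ := by gcongr; exact hb ξ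

lemma polar_bddAbove (hH : IsFinslerNorm H) (x : Euc N) :
    BddAbove {r : ℝ | ∃ ξ : Euc N, ξ ≠ 0 ∧ r = ⟪ξ, x⟫ / H ξ} := by
  obtain ⟨a, b, ha, -, hab⟩ := hH.bounds
  refine ⟨a⁻¹ * ‖x‖, ?_⟩
  rintro r ⟨ξ, hξ, rfl⟩
  exact polar_quotient_le ha (fun ξ => (hab ξ).1) x hξ

lemma le_polarNorm (hH : IsFinslerNorm H) (x : Euc N) {ξ : Euc N} (hξ : ξ ≠ 0) :
    ⟪ξ, x⟫ / H ξ ≤ polarNorm H x :=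
  le_csSup (polar_bddAbove hH x) ⟨ξ, hξ, rfl⟩

lemma polarNorm_lower (hH : IsFinslerNorm H) :
    ∃ b : ℝ, 0 < b ∧ ∀ x : Euc N, x ≠ 0 → ‖x‖ ≤ b * polarNorm H x := by
  obtain ⟨a, b, ha, hle, hab⟩ := hH.bounds
  have hb : 0 < b := ha.trans_le hle
  refine ⟨b, hb, fun x hx => ?_⟩
  have hn : 0 < ‖x‖ := norm_pos_iff.2 hx
  have hpos : 0 < H x := lt_of_lt_of_le (by positivity) (hab x).1
  -- The supremum is tested with `ξ = x`.
  have h := le_polarNorm hH x hx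
  rw [real_inner_self_eq_norm_sq, div_le_iff₀ hpos] at h
  have hP : 0 ≤ polarNorm H x := by
    by_contra hneg
    nlinarith [sq_nonneg ‖x‖, mul_neg_of_neg_of_pos (not_le.1 hneg) hpos]
  have : ‖x‖ * ‖x‖ ≤ (b * polarNorm H x) * ‖x‖ := by
    nlinarith [mul_le_mul_of_nonneg_left (hab x).2 hP]
  exact le_of_mul_le_mul_right this hn

lemma polarNorm_pos (hH : IsFinslerNorm H) {x : Euc N} (hx : x ≠ 0) : 0 < polarNorm H x := by
  obtain ⟨b, hb, h⟩ := polarNorm_lower hH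
  have h1 := (norm_pos_iff.2 hx).trans_le (h x hx)
  exact pos_of_mul_pos_right h1 hb.le

lemma polarNorm_zero : polarNorm H 0 = 0 := by
  unfold polarNorm
  by_cases h : ∃ ξ : Euc N, ξ ≠ 0
  · obtain ⟨ξ, hξ⟩ := h
    have : {r : ℝ | ∃ ξ : Euc N, ξ ≠ 0 ∧ r = ⟪ξ, (0 : Euc N)⟫ / H ξ} = {0} := by
      ext r
      simp only [inner_zero_right, zero_div, mem_ofPred_eq, mem_singleton_iff]
      exact ⟨fun ⟨_, _, h⟩ => h, fun h => ⟨ξ, hξ, h⟩⟩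
    rw [this, csSup_singleton]
  · have : {r : ℝ | ∃ ξ : Euc N, ξ ≠ 0 ∧ r = ⟪ξ, (0 : Euc N)⟫ / H ξ} = ∅ := by
      ext r
      simp only [mem_ofPred_eq, mem_empty_iff_false, iff_false]
      exact fun ⟨ξ, hξ, _⟩ => h ⟨ξ, hξ⟩
    rw [this, Real.sSup_empty]

lemma polarNorm_nonneg (hH : IsFinslerNorm H) (x : Euc N) : 0 ≤ polarNorm H x := by
  by_cases hx : x = 0
  · rw [hx, polarNorm_zero]
  · exact (polarNorm_pos hH hx).le

lemma polarNorm_smul {t : ℝ} (ht : 0 ≤ t) (x : Euc N) :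
    polarNorm H (t • x) = t * polarNorm H x := by
  unfold polarNorm
  rw [← smul_eq_mul, ← Real.sSup_smul_of_nonneg ht]
  congr 1
  ext r
  simp only [mem_ofPred_eq, Set.mem_smul_set, smul_eq_mul]
  constructor
  · rintro ⟨ξ, hξ, rfl⟩
    exact ⟨_, ⟨ξ, hξ, rfl⟩, by rw [real_inner_smul_right]; ring⟩
  · rintro ⟨_, ⟨ξ, hξ, rfl⟩, rfl⟩
    exact ⟨ξ, hξ, by rw [real_inner_smul_right]; ring⟩

lemma polarNorm_continuous (hN : 2 ≤ N) (hH : IsFinslerNorm H) :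
    Continuous (polarNorm H) := by
  obtain ⟨a, b, ha, -, hab⟩ := hH.bounds
  have : Nonempty (Fin N) := ⟨⟨0, by omega⟩⟩
  obtain ⟨ξ₀, hξ₀⟩ := exists_ne (0 : Euc N)
  refine (LipschitzWith.of_le_add_mul' (a⁻¹) fun x y => ?_).continuous
  refine csSup_le ⟨_, ξ₀, hξ₀, rfl⟩ ?_
  rintro r ⟨ξ, hξ, rfl⟩
  have h1 := le_polarNorm hH y hξ
  have h2 := polar_quotient_le ha (fun ξ => (hab ξ).1) (x - y) hξ
  rw [dist_eq_norm]
  have : ⟪ξ, x⟫ / H ξ = ⟪ξ, y⟫ / H ξ + ⟪ξ, x - y⟫ / H ξ := by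
    rw [inner_sub_right]; ring
  linarith

end Polar

/-! ### Averaging over dilations -/

lemma lintegral_dilation {N : ℕ} {G : Euc N → ℝ≥0∞} (hG : Measurable G) {t : ℝ} (ht : 0 < t) :
    ∫⁻ x, G (t • x) = ENNReal.ofReal (t ^ (-(N : ℝ))) * ∫⁻ x, G x := by
  have hmap := Measure.map_addHaar_smul (volume : Measure (Euc N)) ht.ne'
  have h1 : ∫⁻ x, G (t • x) = ∫⁻ y, G y ∂(Measure.map (t • ·) (volume : Measure (Euc N))) :=
    (lintegral_map hG (measurable_const_smul t)).symm
  rw [h1, hmap, lintegral_smul_measure, finrank_euclideanSpace_fin, smul_eq_mul,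
    abs_of_pos (by positivity), Real.rpow_neg ht.le, Real.rpow_natCast]

lemma lintegral_density {q : ℝ} (hq : 1 < q) :
    ∫⁻ t in Ioi (1 : ℝ), ENNReal.ofReal ((q - 1) * t ^ (-q)) = 1 := by
  rw [← ofReal_integral_eq_lintegral_ofReal]
  · rw [integral_const_mul, integral_Ioi_rpow_of_lt (by linarith) one_pos, Real.one_rpow]
    have : -q + 1 ≠ 0 := by linarith
    rw [show (q - 1) * (-1 / (-q + 1)) = 1 by field_simp; ring, ENNReal.ofReal_one]
  · exact (integrableOn_Ioi_rpow_of_lt (by linarith) one_pos).const_mul _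
  · filter_upwards [ae_restrict_mem measurableSet_Ioi] with t ht
    have : (0 : ℝ) < t := one_pos.trans ht
    have : 0 < q - 1 := by linarith
    simp only [Pi.zero_apply]
    positivity

/-- Hardy's averaging inequality: the operator `G ↦ ∫_1^∞ G(t ·) dt` has norm at most
`p / (N - p)` on `L^p(ℝ^N)`. Write `dt = w dν` with the probability measure
`ν = c t^{-N/p} dt`, `c = (N - p) / p`, on `(1, ∞)`; by Jensen and Tonelli the powers of `t`
cancel against the dilation factor `t^{-N}`. -/
lemma lintegral_hardy {N : ℕ} {p : ℝ} (hp1 : 1 ≤ p) (hpN : p < (N : ℝ))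
    {G : Euc N → ℝ≥0∞} (hG : Measurable G) :
    ENNReal.ofReal ((((N : ℝ) - p) / p) ^ p) * ∫⁻ x, (∫⁻ t in Ioi (1 : ℝ), G (t • x)) ^ p
      ≤ ∫⁻ x, G x ^ p := by
  have hp0 : 0 < p := by linarith
  set c : ℝ := ((N : ℝ) - p) / p with hc
  have hc0 : 0 < c := div_pos (by linarith) hp0
  set q : ℝ := (N : ℝ) / p with hq
  have hcq : c = q - 1 := by rw [hc, hq]; field_simp
  have hq1 : 1 < q := by linarith
  set d : ℝ → ℝ≥0∞ := fun t => ENNReal.ofReal (c * t ^ (-q)) with hd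
  set w : ℝ → ℝ≥0∞ := fun t => ENNReal.ofReal (c⁻¹ * t ^ q) with hw
  have hdm : Measurable d := by fun_prop
  have hwm : Measurable w := by fun_prop
  set ν : Measure ℝ := (volume.restrict (Ioi 1)).withDensity d with hν
  have : IsProbabilityMeasure ν := ⟨by
    rw [hν, withDensity_apply _ MeasurableSet.univ, Measure.restrict_univ, hd, hcq]
    exact lintegral_density hq1⟩
  have hGs : Measurable fun z : Euc N × ℝ => G (z.2 • z.1) :=
    hG.comp (measurable_snd.smul measurable_fst)
  have hGx : ∀ x : Euc N, Measurable fun t : ℝ => G (t • x) := fun x =>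
    hG.comp (measurable_id.smul_const x)
  have hinner : ∀ x : Euc N,
      (∫⁻ t in Ioi (1 : ℝ), G (t • x)) ^ p ≤ ∫⁻ t, (w t * G (t • x)) ^ p ∂ν := by
    intro x
    have e1 : ∫⁻ t in Ioi (1 : ℝ), G (t • x) = ∫⁻ t, w t * G (t • x) ∂ν := by
      have hm : Measurable fun t => w t * G (t • x) := hwm.mul (hGx x)
      rw [hν, lintegral_withDensity_eq_lintegral_mul _ hdm hm]
      refine setLIntegral_congr_fun measurableSet_Ioi fun t ht => ?_
      have ht0 : (0 : ℝ) < t := one_pos.trans ht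
      have : d t * w t = 1 := by
        simp only [hd, hw]
        rw [← ENNReal.ofReal_mul (by positivity), ← ENNReal.ofReal_one]
        congr 1
        rw [Real.rpow_neg ht0.le]
        have := (Real.rpow_pos_of_pos ht0 q).ne'
        field_simp
      simp only [Pi.mul_apply]
      rw [← mul_assoc, this, one_mul]
    rw [e1]
    have := eLpNorm'_le_eLpNorm'_of_exponent_le (f := fun t => w t * G (t • x)) one_pos hp1 ν
      (hwm.mul (hGx x)).aestronglyMeasurable
    simp only [eLpNorm', enorm_eq_self, ENNReal.rpow_one, div_one] at this
    calc _ ≤ ((∫⁻ t, (w t * G (t • x)) ^ p ∂ν) ^ (1 / p)) ^ p := by gcongr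
      _ = _ := by rw [← ENNReal.rpow_mul, one_div_mul_cancel hp0.ne', ENNReal.rpow_one]
  calc _ ≤ ENNReal.ofReal (c ^ p) * ∫⁻ x, ∫⁻ t, (w t * G (t • x)) ^ p ∂ν := by
        gcongr with x
        exact hinner x
    _ = ENNReal.ofReal (c ^ p) * ∫⁻ t, (∫⁻ x, (w t * G (t • x)) ^ p) ∂ν := by
        rw [lintegral_lintegral_swap]
        exact (((hwm.comp measurable_snd).mul hGs).pow_const p).aemeasurable
    _ = ENNReal.ofReal (c ^ p) * ∫⁻ _, (ENNReal.ofReal (c ^ (-p)) * ∫⁻ x, G x ^ p) ∂ν := by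
        congr 1
        refine lintegral_congr_ae ?_
        have hmem : ∀ᵐ t ∂ν, t ∈ Ioi (1 : ℝ) :=
          (withDensity_absolutelyContinuous _ _).ae_le (ae_restrict_mem measurableSet_Ioi)
        filter_upwards [hmem] with t ht
        have ht0 : (0 : ℝ) < t := one_pos.trans ht
        simp only [ENNReal.mul_rpow_of_nonneg _ _ hp0.le]
        have hm : Measurable fun x => G (t • x) := hG.comp (measurable_const_smul t)
        rw [lintegral_const_mul _ (hm.pow_const p),
          lintegral_dilation (G := fun x => G x ^ p) (hG.pow_const p) ht0, ← mul_assoc]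
        congr 1
        simp only [hw]
        rw [ENNReal.ofReal_rpow_of_nonneg (by positivity) hp0.le,
          ← ENNReal.ofReal_mul (by positivity)]
        congr 1
        rw [Real.mul_rpow (by positivity) (by positivity), ← Real.rpow_mul ht0.le,
          show q * p = N by rw [hq]; field_simp, Real.inv_rpow hc0.le, Real.rpow_neg hc0.le,
          mul_assoc, ← Real.rpow_add ht0]
        simp
    _ = ∫⁻ x, G x ^ p := by
        rw [lintegral_const, measure_univ, mul_one, ← mul_assoc,
          ← ENNReal.ofReal_mul (by positivity), ← Real.rpow_add hc0]
        simp

/-! ### The radial derivative -/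

/-- Fundamental theorem of calculus along the ray through `x`: since `t x / H⁰(t x) = x / H⁰(x)`,
the function `u(x) / H⁰(x)` is minus the integral over `t ∈ (1, ∞)` of the radial derivative
`(y / H⁰(y)) · ∇u(y)` at `y = t x`. The absolute values are kept inside the integral. -/
lemma enorm_le_lintegral_ray {N : ℕ} {H : Euc N → ℝ} {u : Euc N → ℝ}
    (hu : ContDiff ℝ (⊤ : ℕ∞) u) (hs : HasCompactSupport u) {x : Euc N} (hx : x ≠ 0) :
    ‖(polarNorm H x)⁻¹ * u x‖ₑ ≤
      ∫⁻ t in Ioi (1 : ℝ), ‖⟪(polarNorm H (t • x))⁻¹ • (t • x), gradient u (t • x)⟫‖ₑ := by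
  have hd : Differentiable ℝ u := hu.differentiable (by simp)
  have hgc : Continuous (gradient u) :=
    (InnerProductSpace.toDual ℝ (Euc N)).symm.continuous.comp (hu.continuous_fderiv (by simp))
  have hn : 0 < ‖x‖ := norm_pos_iff.2 hx
  obtain ⟨R, hR⟩ := hs.isCompact.isBounded.subset_closedBall (0 : Euc N)
  obtain ⟨T, hT1, hT⟩ : ∃ T : ℝ, 1 ≤ T ∧ u (T • x) = 0 := by
    refine ⟨max 1 ((R + 1) / ‖x‖), le_max_left _ _, ?_⟩
    by_contra h
    have hmem := hR (subset_tsupport u h)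
    rw [mem_closedBall_zero_iff, norm_smul, Real.norm_of_nonneg (by positivity)] at hmem
    have : R + 1 ≤ max 1 ((R + 1) / ‖x‖) * ‖x‖ := by
      rw [← div_le_iff₀ hn]; exact le_max_right _ _
    linarith
  set k := (polarNorm H x)⁻¹ with hk
  have hder : ∀ t ∈ uIcc 1 T,
      HasDerivAt (fun t : ℝ => k * u (t • x)) (k * ⟪x, gradient u (t • x)⟫) t := by
    intro t _
    have h1 : HasDerivAt (fun t : ℝ => t • x) x t := by
      simpa using (hasDerivAt_id t).smul_const x
    have h2 := (hd (t • x)).hasGradientAt.hasFDerivAt.comp_hasDerivAt t h1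
    refine HasDerivAt.const_mul k ?_
    rw [real_inner_comm]
    simp only [InnerProductSpace.toDual_apply_apply] at h2
    exact h2
  have hcont : Continuous fun t : ℝ => k * ⟪x, gradient u (t • x)⟫ := by fun_prop
  have hftc := intervalIntegral.integral_eq_sub_of_hasDerivAt hder (hcont.intervalIntegrable 1 T)
  rw [hT, mul_zero, zero_sub, one_smul, intervalIntegral.integral_of_le hT1] at hftc
  rw [← enorm_neg, ← hftc]
  refine (enorm_integral_le_lintegral_enorm _).trans ?_
  refine (lintegral_mono_set Ioc_subset_Ioi_self).trans (le_of_eq ?_)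
  refine setLIntegral_congr_fun measurableSet_Ioi fun t ht => ?_
  have ht0 : (0 : ℝ) < t := one_pos.trans ht
  rw [polarNorm_smul ht0.le, smul_smul, real_inner_smul_left]
  congr 2
  rw [hk, mul_inv]
  field_simp

/-- Finiteness of the right-hand side: `|x| / H⁰(x)` is bounded and `∇u` is bounded with compact
support. -/
lemma lintegral_radial_lt_top {N : ℕ} {H : Euc N → ℝ} (hH : IsFinslerNorm H) {u : Euc N → ℝ}
    (hu : ContDiff ℝ (⊤ : ℕ∞) u) (hs : HasCompactSupport u) {p : ℝ} (hp : 0 < p) :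
    ∫⁻ x, ‖⟪(polarNorm H x)⁻¹ • x, gradient u x⟫‖ₑ ^ p < ∞ := by
  have hgc : Continuous (gradient u) :=
    (InnerProductSpace.toDual ℝ (Euc N)).symm.continuous.comp (hu.continuous_fderiv (by simp))
  have hgs : HasCompactSupport (gradient u) :=
    (hs.fderiv ℝ).comp_left (map_zero (InnerProductSpace.toDual ℝ (Euc N)).symm)
  obtain ⟨C, hC⟩ := hgs.exists_bound_of_continuous hgc
  obtain ⟨b, hb, hbx⟩ := polarNorm_lower hH
  set S := tsupport (gradient u)
  have hS : IsCompact S := hgs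
  refine lt_of_le_of_lt (b := ∫⁻ x, S.indicator (fun _ => ENNReal.ofReal (b * C) ^ p) x) ?_ ?_
  · refine lintegral_mono fun x => ?_
    by_cases hxS : x ∈ S
    · rw [indicator_of_mem hxS]
      simp only
      gcongr
      rw [← ofReal_norm]
      apply ENNReal.ofReal_le_ofReal
      refine (norm_inner_le_norm _ _).trans ?_
      refine mul_le_mul ?_ (hC x) (norm_nonneg _) hb.le
      by_cases hx : x = 0
      · simp [hx, hb.le]
      · have hP := polarNorm_pos hH hx
        rw [norm_smul, norm_inv, Real.norm_of_nonneg hP.le, inv_mul_le_iff₀ hP, mul_comm]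
        exact hbx x hx
    · have : gradient u x = 0 := image_eq_zero_of_notMem_tsupport hxS
      simp [this, hp]
  · rw [lintegral_indicator hS.measurableSet, setLIntegral_const]
    exact ENNReal.mul_lt_top (ENNReal.rpow_lt_top_of_nonneg hp.le ENNReal.ofReal_ne_top)
      hS.measure_lt_top

/-- Sharp anisotropic subcritical Hardy inequality, case 1 <= p < N. -/
theorem finsler_hardy_subcritical
    (N : ℕ) (hN : 2 ≤ N) (H : Euc N → ℝ) (hH : IsFinslerNorm H)
    (p : ℝ) (hp1 : 1 ≤ p) (hpN : p < (N : ℝ))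
    (Ω : Set (Euc N)) (hΩopen : IsOpen Ω) (hΩconn : IsConnected Ω)
    (u : Euc N → ℝ) (hu : IsTestFun Ω u) :
    (((N : ℝ) - p) / p) ^ p * ∫ x in Ω, |u x| ^ p / polarNorm H x ^ p
      ≤ ∫ x in Ω, |⟪(polarNorm H x)⁻¹ • x, gradient u x⟫| ^ p := by
  obtain ⟨hsm, hcs, hsub⟩ := hu
  have hp0 : 0 < p := by linarith
  have hgc : Continuous (gradient u) :=
    (InnerProductSpace.toDual ℝ (Euc N)).symm.continuous.comp (hsm.continuous_fderiv (by simp))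
  have hPc := polarNorm_continuous hN hH
  have hu0 : ∀ x, x ∉ Ω → u x = 0 := fun x hx =>
    image_eq_zero_of_notMem_tsupport fun h => hx (hsub h)
  have hg0 : ∀ x, x ∉ Ω → gradient u x = 0 := fun x hx => by
    have : fderiv ℝ u x = 0 := image_eq_zero_of_notMem_tsupport fun h =>
      hx (hsub (tsupport_fderiv_subset ℝ h))
    simp [gradient, this]
  rw [setIntegral_eq_integral_of_forall_compl_eq_zero
      (fun x hx => by simp [hu0 x hx, Real.zero_rpow hp0.ne']),
    setIntegral_eq_integral_of_forall_compl_eq_zero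
      (fun x hx => by simp [hg0 x hx, Real.zero_rpow hp0.ne'])]
  set g : Euc N → ℝ := fun x => ⟪(polarNorm H x)⁻¹ • x, gradient u x⟫ with hg
  have hgm : Measurable g :=
    (hPc.measurable.inv.smul measurable_id).inner hgc.measurable
  have hR : ∫ x, |g x| ^ p = (∫⁻ x, ‖g x‖ₑ ^ p).toReal := by
    rw [← integral_toReal (hgm.enorm.pow_const p).aemeasurable
      (Eventually.of_forall fun x => ENNReal.rpow_lt_top_of_nonneg hp0.le enorm_ne_top)]
    refine integral_congr_ae (Eventually.of_forall fun x => ?_)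
    simp [← ENNReal.toReal_rpow]
  have hL : ∫ x, |u x| ^ p / polarNorm H x ^ p
      = (∫⁻ x, ‖(polarNorm H x)⁻¹ * u x‖ₑ ^ p).toReal := by
    have hm : Measurable fun x => (polarNorm H x)⁻¹ * u x :=
      hPc.measurable.inv.mul hsm.continuous.measurable
    rw [← integral_toReal (hm.enorm.pow_const p).aemeasurable
      (Eventually.of_forall fun x => ENNReal.rpow_lt_top_of_nonneg hp0.le enorm_ne_top)]
    refine integral_congr_ae (Eventually.of_forall fun x => ?_)
    have hP := polarNorm_nonneg hH x
    simp only [← ENNReal.toReal_rpow, toReal_enorm, norm_mul, norm_inv, Real.norm_eq_abs,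
      abs_of_nonneg hP]
    rw [Real.mul_rpow (inv_nonneg.2 hP) (abs_nonneg _), Real.inv_rpow hP, div_eq_inv_mul]
  have hc0 : 0 ≤ (((N : ℝ) - p) / p) ^ p :=
    Real.rpow_nonneg (div_nonneg (by linarith) hp0.le) _
  rw [hR, hL]
  nth_rewrite 1 [← ENNReal.toReal_ofReal hc0]
  rw [← ENNReal.toReal_mul]
  refine ENNReal.toReal_mono (lintegral_radial_lt_top hH hsm hcs hp0).ne ?_
  refine le_trans ?_ (lintegral_hardy hp1 hpN hgm.enorm)
  refine mul_le_mul_right ?_ _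
  refine lintegral_mono fun x => ENNReal.rpow_le_rpow ?_ hp0.le
  by_cases hx : x = 0
  · simp [hx, polarNorm_zero]
  · exact enorm_le_lintegral_ray hsm hcs hx
end
end

section
/- Let p > N and let Ω ⊆ ℝ^N be a domain. Then for every u ∈ C_c^∞(Ω ∖ {0}), ((p−N)/p)^p · ∫_Ω |u(x)|^p / H⁰(x)^p dx ≤ ∫_Ω |(x/H⁰(x)) · ∇u(x)|^p dx. -/
/-!
Write `K` for the polar function. It is positive off the origin, homogeneous of degree one and
Lipschitz (`norm_le_polar`, `polar_smul`, `continuous_polar`), and nothing more about it is needed.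

Differentiating `∫ |u(tx)|^p K(x)^(-p) dx = t^(p-N) ∫ |u|^p K^(-p)` at `t = 1` gives the Euler
identity `(p - N) ∫ |u|^p K^(-p) = ∫ x·∇(|u|^p) K^(-p)` (`integral_fderiv_radial`). The integrand
on the right is at most `p a^(p-1) b` with `a = |u|/K` and `b = |(x/K)·∇u|`. Put `c = (p - N)/p`
and apply Young's inequality to `(c a)^(p-1) b` (`young_absorb`):
`c^p ∫ a^p ≤ (1 - 1/p) c^p ∫ a^p + (1/p) ∫ b^p`, and absorbing the first term on the right yields
`c^p ∫ a^p ≤ ∫ b^p`.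
-/

open MeasureTheory Set Filter
open scoped RealInnerProductSpace Topology ENNReal NNReal

noncomputable section

/-- A bounded measurable function vanishing off a ball is integrable. -/
lemma integrable_of_bdd_ball {N : ℕ} {f : Euc N → ℝ} (hf : Measurable f) {C R : ℝ}
    (hC : ∀ x, |f x| ≤ C) (h0 : ∀ x, R < ‖x‖ → f x = 0) : Integrable f := by
  have hb : Integrable ((Metric.closedBall (0 : Euc N) R).indicator fun _ => C) :=
    (integrable_indicator_iff Metric.isClosed_closedBall.measurableSet).2
      (integrableOn_const (measure_closedBall_lt_top).ne)
  refine hb.mono' hf.aestronglyMeasurable (ae_of_all _ fun x => ?_)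
  by_cases hx : x ∈ Metric.closedBall (0 : Euc N) R
  · rw [indicator_of_mem hx]; exact hC x
  · rw [indicator_of_notMem hx, h0 x (by simpa using hx), norm_zero]

/-- Euler's identity `∫ (x · ∇v) w = (p - N) ∫ v w` for a weight `w` homogeneous of degree `-p`.
It is the derivative at `t = 1` of `∫ v(tx) w(x) dx = t ^ (p - N) ∫ v w`, so no regularity of
the weight is needed. -/
lemma integral_fderiv_radial {N : ℕ} {p : ℝ} {v w : Euc N → ℝ}
    (hv : ContDiff ℝ 1 v) (hvc : HasCompactSupport v) (hv0 : (0 : Euc N) ∉ tsupport v)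
    (hw : Measurable w) (hwh : ∀ t : ℝ, 0 < t → ∀ x, w (t • x) = t ^ (-p) * w x)
    (hwb : ∀ r : ℝ, 0 < r → ∃ C : ℝ, ∀ x, r ≤ ‖x‖ → |w x| ≤ C) :
    Integrable (fun x => v x * w x) ∧ Integrable (fun x => fderiv ℝ v x x * w x) ∧
      ∫ x, fderiv ℝ v x x * w x = (p - N) * ∫ x, v x * w x := by
  have hfc : Continuous (fderiv ℝ v) := hv.continuous_fderiv one_ne_zero
  obtain ⟨M, hM⟩ := hvc.exists_bound_of_continuous hv.continuous
  obtain ⟨L, hL⟩ := (hvc.fderiv ℝ).exists_bound_of_continuous hfc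
  have hM0 : 0 ≤ M := (norm_nonneg _).trans (hM 0)
  have hL0 : 0 ≤ L := (norm_nonneg _).trans (hL 0)
  obtain ⟨r, hr, hball⟩ : ∃ r > 0, ∀ y : Euc N, ‖y‖ < r → y ∉ tsupport v := by
    obtain ⟨r, hr, h⟩ := Metric.isOpen_iff.1 (isClosed_tsupport v).isOpen_compl 0 hv0
    exact ⟨r, hr, fun y hy => h (by simpa using hy)⟩
  obtain ⟨R, hR, hout⟩ : ∃ R > 0, ∀ y : Euc N, R < ‖y‖ → y ∉ tsupport v := by
    obtain ⟨R, hR⟩ := hvc.isCompact.isBounded.exists_norm_le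
    exact ⟨max R 1, by positivity, fun y hy hy' =>
      absurd (hR y hy') (not_le.2 ((le_max_left _ _).trans_lt hy))⟩
  obtain ⟨C, hC⟩ := hwb (r / 2) (by positivity)
  have hC' : ∀ x, r / 2 ≤ ‖x‖ → |w x| ≤ |C| := fun x hx => (hC x hx).trans (le_abs_self _)
  have hnorm : ∀ t : ℝ, t ∈ Metric.ball (1 : ℝ) (1 / 2) → ∀ x : Euc N,
      (‖x‖ < r / 2 → t • x ∉ tsupport v) ∧ (2 * R < ‖x‖ → t • x ∉ tsupport v) := by
    intro t ht x
    rw [Metric.mem_ball, Real.dist_eq, abs_lt] at ht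
    have htn : ‖t • x‖ = t * ‖x‖ := by rw [norm_smul, Real.norm_of_nonneg (by linarith)]
    constructor <;> intro hx
    · apply hball; rw [htn]; nlinarith [norm_nonneg x]
    · apply hout; rw [htn]; nlinarith [norm_nonneg x]
  have h1 : (1 : ℝ) ∈ Metric.ball (1 : ℝ) (1 / 2) := by simp
  have hint : Integrable (fun x => v x * w x) := by
    refine integrable_of_bdd_ball (hv.continuous.measurable.mul hw) (C := M * |C|) (R := R) ?_ ?_
    · intro x
      rcases lt_or_ge ‖x‖ (r / 2) with hx | hx
      · rw [image_eq_zero_of_notMem_tsupport (hball x (by linarith))]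
        simp; positivity
      · rw [abs_mul]
        exact mul_le_mul (hM x) (hC' x hx) (abs_nonneg _) hM0
    · intro x hx
      rw [image_eq_zero_of_notMem_tsupport (hout x hx), zero_mul]
  have hmeas : Measurable fun x => fderiv ℝ v x x * w x :=
    (hfc.clm_apply continuous_id).measurable.mul hw
  have hbint : Integrable ((Metric.closedBall (0 : Euc N) (2 * R)).indicator
      fun _ => L * (2 * R) * |C|) :=
    (integrable_indicator_iff Metric.isClosed_closedBall.measurableSet).2
      (integrableOn_const (measure_closedBall_lt_top).ne)
  have key := hasDerivAt_integral_of_dominated_loc_of_deriv_le (μ := volume)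
    (F := fun (t : ℝ) (x : Euc N) => v (t • x) * w x)
    (F' := fun (t : ℝ) (x : Euc N) => fderiv ℝ v (t • x) x * w x) (x₀ := 1)
    (Metric.ball_mem_nhds (1 : ℝ) (by norm_num : (0 : ℝ) < 1 / 2))
    (Eventually.of_forall fun t => ((hv.continuous.comp (continuous_const_smul t)).measurable.mul
      hw).aestronglyMeasurable)
    (by simpa using hint)
    (by simpa using hmeas.aestronglyMeasurable)
    (ae_of_all _ fun x t ht => by
      by_cases hx : x ∈ Metric.closedBall (0 : Euc N) (2 * R)
      · rw [indicator_of_mem hx]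
        have hx' : ‖x‖ ≤ 2 * R := by simpa using hx
        rcases lt_or_ge ‖x‖ (r / 2) with hx2 | hx2
        · rw [fderiv_of_notMem_tsupport ℝ ((hnorm t ht x).1 hx2)]
          simp; positivity
        · rw [norm_mul]
          refine mul_le_mul ?_ (hC' x hx2) (norm_nonneg _) (by positivity)
          exact ((fderiv ℝ v (t • x)).le_opNorm x).trans
            (mul_le_mul (hL _) hx' (norm_nonneg _) hL0)
      · rw [indicator_of_notMem hx,
          fderiv_of_notMem_tsupport ℝ ((hnorm t ht x).2 (by simpa using hx))]
        simp)
    hbint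
    (ae_of_all _ fun x t _ => by
      have h := ((hv.differentiable one_ne_zero) (t • x)).hasFDerivAt.comp_hasDerivAt t
        ((hasDerivAt_id t).smul_const x)
      simpa using h.mul_const (w x))
  simp only [one_smul] at key
  refine ⟨hint, key.1, ?_⟩
  -- Change of variables evaluates the same one-parameter integral in closed form.
  have hscale : ∀ t : ℝ, 0 < t →
      ∫ x, v (t • x) * w x = t ^ (p - N) * ∫ x, v x * w x := by
    intro t ht
    have e : ∀ x, v (t • x) * w x = t ^ p * (v (t • x) * w (t • x)) := by
      intro x
      rw [hwh t ht, Real.rpow_neg ht.le]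
      have := (Real.rpow_pos_of_pos ht p).ne'
      field_simp
    simp_rw [e]
    rw [integral_const_mul, Measure.integral_comp_smul_of_nonneg volume
      (fun x => v x * w x) t (hR := ht.le), finrank_euclideanSpace_fin, smul_eq_mul, ← mul_assoc,
      Real.rpow_sub ht, Real.rpow_natCast, div_eq_mul_inv]
  have hd : HasDerivAt (fun t : ℝ => ∫ x, v (t • x) * w x) ((p - N) * ∫ x, v x * w x) 1 := by
    have h := (Real.hasDerivAt_rpow_const (x := 1) (p := p - N) (Or.inl one_ne_zero)).mul_const
      (∫ x, v x * w x)
    rw [Real.one_rpow, mul_one] at h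
    refine h.congr_of_eventuallyEq ?_
    filter_upwards [lt_mem_nhds (zero_lt_one (α := ℝ))] with t ht using hscale t ht
  exact key.2.unique hd

section Polar

variable {N : ℕ} {H : Euc N → ℝ} {a b : ℝ}

lemma polar_bdd (ha : 0 < a) (hab : ∀ ξ : Euc N, a * ‖ξ‖ ≤ H ξ ∧ H ξ ≤ b * ‖ξ‖) (x : Euc N) :
    ‖x‖ / a ∈ upperBounds {r : ℝ | ∃ ξ : Euc N, ξ ≠ 0 ∧ r = ⟪ξ, x⟫ / H ξ} := by
  rintro _ ⟨ξ, hξ, rfl⟩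
  have hn : 0 < ‖ξ‖ := norm_pos_iff.2 hξ
  have hH : 0 < H ξ := (mul_pos ha hn).trans_le (hab ξ).1
  rw [div_le_div_iff₀ hH ha]
  calc ⟪ξ, x⟫ * a ≤ ‖ξ‖ * ‖x‖ * a := by gcongr; exact real_inner_le_norm _ _
    _ = ‖x‖ * (a * ‖ξ‖) := by ring
    _ ≤ ‖x‖ * H ξ := by gcongr; exact (hab ξ).1

lemma le_polar (ha : 0 < a) (hab : ∀ ξ : Euc N, a * ‖ξ‖ ≤ H ξ ∧ H ξ ≤ b * ‖ξ‖) (x : Euc N)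
    {ξ : Euc N} (hξ : ξ ≠ 0) : ⟪ξ, x⟫ / H ξ ≤ polarNorm H x :=
  le_csSup ⟨_, polar_bdd ha hab x⟩ ⟨ξ, hξ, rfl⟩

lemma polar_le (hN : 2 ≤ N) (x : Euc N) {c : ℝ} (h : ∀ ξ : Euc N, ξ ≠ 0 → ⟪ξ, x⟫ / H ξ ≤ c) :
    polarNorm H x ≤ c := by
  have : Nonempty (Fin N) := ⟨⟨0, by omega⟩⟩
  obtain ⟨ξ, hξ⟩ := exists_ne (0 : Euc N)
  refine csSup_le ⟨_, ξ, hξ, rfl⟩ ?_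
  rintro _ ⟨ξ, hξ, rfl⟩
  exact h ξ hξ

lemma polar_smul_le (hN : 2 ≤ N) (ha : 0 < a)
    (hab : ∀ ξ : Euc N, a * ‖ξ‖ ≤ H ξ ∧ H ξ ≤ b * ‖ξ‖) {t : ℝ} (ht : 0 < t) (x : Euc N) :
    polarNorm H (t • x) ≤ t * polarNorm H x := by
  refine polar_le hN _ fun ξ hξ => ?_
  rw [inner_smul_right, mul_div_assoc]
  exact mul_le_mul_of_nonneg_left (le_polar ha hab x hξ) ht.le

lemma polar_smul (hN : 2 ≤ N) (ha : 0 < a)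
    (hab : ∀ ξ : Euc N, a * ‖ξ‖ ≤ H ξ ∧ H ξ ≤ b * ‖ξ‖) {t : ℝ} (ht : 0 < t) (x : Euc N) :
    polarNorm H (t • x) = t * polarNorm H x := by
  refine (polar_smul_le hN ha hab ht x).antisymm ?_
  have h := polar_smul_le hN ha hab (inv_pos.2 ht) (t • x)
  rw [inv_smul_smul₀ ht.ne', inv_mul_eq_div, le_div_iff₀ ht] at h
  linarith

/-- The lower bound comes from testing the supremum with `ξ = x`. -/
lemma norm_le_polar (ha : 0 < a) (hb : 0 < b)
    (hab : ∀ ξ : Euc N, a * ‖ξ‖ ≤ H ξ ∧ H ξ ≤ b * ‖ξ‖) {x : Euc N} (hx : x ≠ 0) :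
    ‖x‖ / b ≤ polarNorm H x := by
  refine le_trans ?_ (le_polar ha hab x hx)
  have hn : 0 < ‖x‖ := norm_pos_iff.2 hx
  have hH : 0 < H x := (mul_pos ha hn).trans_le (hab x).1
  rw [div_le_div_iff₀ hb hH, real_inner_self_eq_norm_sq]
  nlinarith [(hab x).2]

/-- Subadditivity and the upper bound make the polar function Lipschitz. -/
lemma continuous_polar (hN : 2 ≤ N) (ha : 0 < a)
    (hab : ∀ ξ : Euc N, a * ‖ξ‖ ≤ H ξ ∧ H ξ ≤ b * ‖ξ‖) : Continuous (polarNorm H) := by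
  refine (LipschitzWith.of_le_add_mul (Real.toNNReal a⁻¹) fun x y => ?_).continuous
  rw [Real.coe_toNNReal _ (inv_pos.2 ha).le, dist_eq_norm]
  refine polar_le hN _ fun ξ hξ => ?_
  have h1 := le_polar ha hab y hξ
  have h2 := polar_bdd ha hab (x - y) ⟨ξ, hξ, rfl⟩
  have h3 : ⟪ξ, x⟫ / H ξ = ⟪ξ, y⟫ / H ξ + ⟪ξ, x - y⟫ / H ξ := by
    rw [inner_sub_right]; ring
  rw [div_eq_inv_mul ‖x - y‖] at h2
  linarith

end Polar

/-- Young's inequality in the form that absorbs the Hardy term with the sharp constant. -/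
lemma young_absorb {p c a b : ℝ} (hp : 1 < p) (hc : 0 ≤ c) (ha : 0 ≤ a) (hb : 0 ≤ b) :
    c ^ (p - 1) * (a ^ (p - 1) * b) ≤ (1 - 1 / p) * (c ^ p * a ^ p) + 1 / p * b ^ p := by
  have hp0 : 0 < p := by linarith
  have hca := mul_nonneg hc ha
  have h := Real.geom_mean_le_arith_mean2_weighted (w₁ := 1 - 1 / p) (w₂ := 1 / p)
    (p₁ := (c * a) ^ p) (p₂ := b ^ p)
    (by rw [sub_nonneg, div_le_one hp0]; exact hp.le) (by positivity) (by positivity)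
    (by positivity) (by ring)
  rw [← Real.rpow_mul hca, ← Real.rpow_mul hb, mul_one_div_cancel hp0.ne', Real.rpow_one,
    show p * (1 - 1 / p) = p - 1 by field_simp, Real.mul_rpow hc ha, Real.mul_rpow hc ha] at h
  linarith

/-- Sharp anisotropic subcritical Hardy inequality, case p > N. -/
theorem finsler_hardy_supercritical
    (N : ℕ) (hN : 2 ≤ N) (H : Euc N → ℝ) (hH : IsFinslerNorm H)
    (p : ℝ) (hpN : (N : ℝ) < p)
    (Ω : Set (Euc N)) (hΩopen : IsOpen Ω) (hΩconn : IsConnected Ω)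
    (u : Euc N → ℝ) (hu : IsTestFun (Ω \ {0}) u) :
    ((p - (N : ℝ)) / p) ^ p * ∫ x in Ω, |u x| ^ p / polarNorm H x ^ p
      ≤ ∫ x in Ω, |⟪(polarNorm H x)⁻¹ • x, gradient u x⟫| ^ p := by
  obtain ⟨hus, huc, hut⟩ := hu
  obtain ⟨a, b, ha, hab', hab⟩ := hH.bounds
  have hb : 0 < b := ha.trans_le hab'
  have hN' : (2 : ℝ) ≤ N := by exact_mod_cast hN
  have hp1 : 1 < p := by linarith
  have hp0 : 0 < p := by linarith
  have hK := continuous_polar hN ha hab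
  have hKpos : ∀ x : Euc N, x ≠ 0 → 0 < polarNorm H x := fun x hx =>
    (div_pos (norm_pos_iff.2 hx) hb).trans_le (norm_le_polar ha hb hab hx)
  have h0 : (0 : Euc N) ∉ tsupport u := fun h => (hut h).2 rfl
  have hΩ0 : ∀ x, x ∉ Ω → x ∉ tsupport u := fun x hx h => hx (hut h).1
  have hinner : ∀ x, ⟪(polarNorm H x)⁻¹ • x, gradient u x⟫
      = (polarNorm H x)⁻¹ * fderiv ℝ u x x := by
    intro x
    rw [real_inner_comm, inner_gradient_left, map_smul, smul_eq_mul]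
  simp_rw [hinner]
  -- Both integrands vanish off the support of `u`, so the domain plays no role.
  rw [setIntegral_eq_integral_of_forall_compl_eq_zero (fun x hx => by
      rw [image_eq_zero_of_notMem_tsupport (hΩ0 x hx), abs_zero, Real.zero_rpow hp0.ne',
        zero_div]),
    setIntegral_eq_integral_of_forall_compl_eq_zero (fun x hx => by
      rw [fderiv_of_notMem_tsupport ℝ (hΩ0 x hx)]
      simp [Real.zero_rpow hp0.ne'])]
  have hu1 : ContDiff ℝ 1 u := hus.of_le (by exact_mod_cast le_top)
  have hfc : Continuous (fderiv ℝ u) := hu1.continuous_fderiv one_ne_zero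
  obtain ⟨L, hL⟩ := (huc.fderiv ℝ).exists_bound_of_continuous hfc
  have hL0 : 0 ≤ L := (norm_nonneg _).trans (hL 0)
  obtain ⟨R, hR⟩ := huc.isCompact.isBounded.exists_norm_le
  have hBint : Integrable fun x => |(polarNorm H x)⁻¹ * fderiv ℝ u x x| ^ p := by
    refine integrable_of_bdd_ball (C := (b * L) ^ p) (R := R) ?_ ?_ ?_
    · exact ((hK.measurable.inv.mul
        (hfc.clm_apply continuous_id).measurable).abs).pow_const p
    · intro x
      rw [abs_of_nonneg (by positivity)]
      refine Real.rpow_le_rpow (abs_nonneg _) ?_ hp0.le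
      by_cases hx : x = 0
      · subst hx; simp; positivity
      have hk := hKpos x hx
      rw [abs_mul, abs_of_pos (inv_pos.2 hk), inv_mul_le_iff₀ hk]
      calc |fderiv ℝ u x x| ≤ ‖fderiv ℝ u x‖ * ‖x‖ := (fderiv ℝ u x).le_opNorm x
        _ ≤ L * (polarNorm H x * b) := by
          gcongr
          · exact hL x
          · exact (div_le_iff₀ hb).1 (norm_le_polar ha hb hab hx)
        _ = _ := by ring
    · intro x hx
      rw [fderiv_of_notMem_tsupport ℝ (fun h => absurd (hR x h) (not_le.2 hx))]
      simp [Real.zero_rpow hp0.ne']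
  have hvsub : tsupport (fun x => ‖u x‖ ^ p) ⊆ tsupport u := by
    refine closure_mono fun x hx hx' => hx ?_
    simp [hx', Real.zero_rpow hp0.ne']
  obtain ⟨hAint, hDint, hE⟩ := integral_fderiv_radial (p := p) (v := fun x => ‖u x‖ ^ p)
    (w := fun x => (polarNorm H x ^ p)⁻¹) (hu1.norm_rpow hp1)
    (huc.mono' ((subset_tsupport _).trans hvsub)) (fun h => h0 (hvsub h))
    (hK.measurable.pow_const p).inv
    (by
      intro t ht x
      have hk : 0 ≤ polarNorm H x := by
        by_cases hx : x = 0
        · subst hx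
          refine le_of_eq ?_
          have h2 := polar_smul hN ha hab (zero_lt_two) (0 : Euc N)
          rw [smul_zero] at h2
          linarith
        · exact (hKpos x hx).le
      rw [polar_smul hN ha hab ht, Real.mul_rpow ht.le hk, mul_inv, Real.rpow_neg ht.le])
    (by
      intro r hr
      refine ⟨((r / b) ^ p)⁻¹, fun x hx => ?_⟩
      have hx0 : x ≠ 0 := norm_pos_iff.1 (hr.trans_le hx)
      have hle : r / b ≤ polarNorm H x :=
        (div_le_div_of_nonneg_right hx hb.le).trans (norm_le_polar ha hb hab hx0)
      have hrb : 0 < r / b := by positivity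
      rw [abs_of_nonneg (inv_nonneg.2 (Real.rpow_nonneg (hKpos x hx0).le p))]
      exact inv_anti₀ (Real.rpow_pos_of_pos hrb p) (Real.rpow_le_rpow hrb.le hle hp0.le))
  simp only [Real.norm_eq_abs, ← div_eq_mul_inv] at hAint hDint hE
  set A := ∫ x, |u x| ^ p / polarNorm H x ^ p with hA
  set B := ∫ x, |(polarNorm H x)⁻¹ * fderiv ℝ u x x| ^ p with hB
  set c := (p - (N : ℝ)) / p with hc
  have hc0 : 0 < c := div_pos (by linarith) hp0
  have hpt : ∀ x, c ^ (p - 1) * (fderiv ℝ (fun x => |u x| ^ p) x x / polarNorm H x ^ p)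
      ≤ p * ((1 - 1 / p) * (c ^ p * (|u x| ^ p / polarNorm H x ^ p))
        + 1 / p * |(polarNorm H x)⁻¹ * fderiv ℝ u x x| ^ p) := by
    intro x
    by_cases hx : x = 0
    · subst hx
      simp [image_eq_zero_of_notMem_tsupport h0, Real.zero_rpow hp0.ne']
    have hk := hKpos x hx
    have hy := young_absorb (a := |u x| / polarNorm H x)
      (b := |(polarNorm H x)⁻¹ * fderiv ℝ u x x|) hp1 hc0.le (by positivity) (abs_nonneg _)
    rw [Real.div_rpow (abs_nonneg _) hk.le, Real.div_rpow (abs_nonneg _) hk.le] at hy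
    refine le_trans ?_ (mul_le_mul_of_nonneg_left hy hp0.le)
    have hd : |fderiv ℝ (fun x => |u x| ^ p) x x| ≤ p * |u x| ^ (p - 1) * |fderiv ℝ u x x| := by
      have h : fderiv ℝ (fun x => |u x| ^ p) x = (p * |u x| ^ (p - 2) * u x) • fderiv ℝ u x :=
        ((hasDerivAt_abs_rpow (u x) hp1).comp_hasFDerivAt x
          (hu1.differentiable one_ne_zero x).hasFDerivAt).fderiv
      rw [h, smul_apply, smul_eq_mul, abs_mul]
      refine mul_le_mul_of_nonneg_right (le_of_eq ?_) (abs_nonneg _)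
      rw [abs_mul, abs_mul, abs_of_pos hp0, abs_of_nonneg (by positivity), mul_assoc]
      congr 1
      by_cases hux : u x = 0
      · rw [hux, abs_zero, mul_zero, Real.zero_rpow (by linarith)]
      · rw [← Real.rpow_add_one (abs_ne_zero.2 hux)]
        congr 1; ring
    rw [mul_left_comm p]
    refine mul_le_mul_of_nonneg_left ?_ (by positivity)
    rw [abs_mul, abs_of_pos (inv_pos.2 hk)]
    calc _ ≤ p * |u x| ^ (p - 1) * |fderiv ℝ u x x| / polarNorm H x ^ p := by
          gcongr
          exact (le_abs_self _).trans hd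
      _ = _ := by
          rw [Real.rpow_sub_one hk.ne']
          have := (Real.rpow_pos_of_pos hk p).ne'
          field_simp
  have hi := integral_mono (hDint.const_mul (c ^ (p - 1)))
    ((((hAint.const_mul (c ^ p)).const_mul (1 - 1 / p)).add (hBint.const_mul (1 / p))).const_mul p)
    hpt
  simp only [Pi.add_apply] at hi
  rw [integral_const_mul, integral_const_mul, integral_add
    ((hAint.const_mul (c ^ p)).const_mul (1 - 1 / p)) (hBint.const_mul (1 / p)),
    integral_const_mul, integral_const_mul, integral_const_mul, hE, ← hA, ← hB] at hi
  have hpc : p - N = p * c := by rw [hc]; field_simp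
  have hcp : c ^ p = c ^ (p - 1) * c := by
    rw [← Real.rpow_add_one hc0.ne']; congr 1; ring
  have e1 : c ^ (p - 1) * ((p - N) * A) = p * (c ^ p * A) := by rw [hpc, hcp]; ring
  have e2 : p * ((1 - 1 / p) * (c ^ p * A) + 1 / p * B) = p * (c ^ p * A) - c ^ p * A + B := by
    field_simp
  rw [e1, e2] at hi
  linarith
end
end

section
/- Let 1 < p < ∞, let Ω ⊆ ℝ^N be a domain, and let δ ∈ C¹(Ω) be positive on Ω. Assume δ is Δ_{H,p}-superharmonic in the distributional sense, i.e. ∫_Ω H(∇δ(x))^{p−1} (∇_ξ H)(∇δ(x)) · ∇φ(x) dx ≥ 0 for every nonnegative φ ∈ C_c^∞(Ω), where the vector field H(∇δ)^{p−1}(∇_ξ H)(∇δ) is taken to be 0 at points where ∇δ = 0. Then for every u ∈ C_c^∞(Ω), ((p−1)/p)^p · ∫_Ω (|u(x)|^p / δ(x)^p) H(∇δ(x))^p dx ≤ ∫_Ω |∇u(x) · (∇_ξ H)(∇δ(x))|^p dx, where the right-hand integrand is taken to be 0 at points where ∇δ = 0. -/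
/-!
The proof tests the superharmonicity of `δ` with `φ = |u|^p δ^(1-p)`. Let `h = H(∇δ)`,
`w = ∇u · ∇H(∇δ)`, `a = |u| h / δ` and `k = (p-1)/p`. Euler's identity `∇H(ξ) · ξ = H(ξ)`
(`FinslerAux.euler`) gives, for the field `V = h^(p-1) ∇H(∇δ)`,
`V · ∇φ = p |u|^(p-2) u δ^(1-p) h^(p-1) w - (p-1) a^p ≤ p a^(p-1) |w| - (p-1) a^p`.
Multiplying by `k^(p-1)` and applying Young's inequality to `(k a)^(p-1) |w|` yields
`k^(p-1) V · ∇φ ≤ |w|^p - k^p a^p` (`FinslerAux.pointwise`), and integration over `Ω` concludes,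
because `∫ V · ∇φ ≥ 0`.

The function `φ` is only `C¹`, whereas superharmonicity is assumed for smooth test functions.
Since `V` is locally bounded (`H` is Lipschitz, hence `∇H` is bounded), mollification
(`FinslerAux.exists_mollified`) extends the inequality to nonnegative compactly supported `C¹`
functions (`FinslerAux.superharmonic_extend`).
-/

open MeasureTheory Set Filter
open scoped RealInnerProductSpace Topology ENNReal NNReal

noncomputable section

section FinslerAux

open scoped Convolution

/-! ### Gradients -/

lemma FinslerAux.measurable_gradient {N : ℕ} (f : Euc N → ℝ) : Measurable (gradient f) := by
  have h1 : Measurable (fderiv ℝ f) := measurable_fderiv ℝ f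
  exact (InnerProductSpace.toDual ℝ (Euc N)).symm.continuous.measurable.comp h1

lemma FinslerAux.inner_gradient {N : ℕ} (f : Euc N → ℝ) (x v : Euc N) :
    ⟪gradient f x, v⟫ = fderiv ℝ f x v := by
  simp [gradient]

lemma FinslerAux.norm_gradient {N : ℕ} (f : Euc N → ℝ) (x : Euc N) :
    ‖gradient f x‖ = ‖fderiv ℝ f x‖ := by
  simp [gradient]

lemma FinslerAux.norm_gradient_sub {N : ℕ} (f g : Euc N → ℝ) (x : Euc N) :
    ‖gradient f x - gradient g x‖ = ‖fderiv ℝ f x - fderiv ℝ g x‖ := by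
  rw [gradient, gradient, ← map_sub, LinearIsometryEquiv.norm_map]

lemma FinslerAux.gradient_eq_zero {N : ℕ} {f : Euc N → ℝ} {x : Euc N} (hx : x ∉ tsupport f) :
    gradient f x = 0 := by
  have : fderiv ℝ f x = 0 := by
    by_contra h
    exact hx (support_fderiv_subset ℝ h)
  simp [gradient, this]

/-! ### Finsler norms -/

/-- `H` is Lipschitz: convexity and homogeneity make it subadditive, and `H ≤ b‖·‖` then gives
`H x - H y ≤ H (x - y) ≤ b‖x - y‖`. -/
lemma FinslerAux.exists_lipschitz {N : ℕ} {H : Euc N → ℝ} (hH : IsFinslerNorm H) :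
    ∃ C : ℝ≥0, LipschitzWith C H := by
  obtain ⟨a, b, ha, hab, hb⟩ := hH.bounds
  have hsub : ∀ x y, H (x + y) ≤ H x + H y := by
    intro x y
    have h := hH.convexOn.2 (mem_univ ((2 : ℝ) • x)) (mem_univ ((2 : ℝ) • y))
      (by norm_num : (0 : ℝ) ≤ 1 / 2) (by norm_num : (0 : ℝ) ≤ 1 / 2) (by norm_num)
    rw [smul_smul, smul_smul, hH.homog, hH.homog] at h
    norm_num at h
    linarith
  refine ⟨⟨b, by linarith⟩, LipschitzWith.of_le_add_mul _ fun x y => ?_⟩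
  have h := hsub y (x - y)
  rw [add_sub_cancel] at h
  rw [dist_eq_norm]
  exact h.trans (by gcongr; exact (hb _).2)

/-- Euler's identity for the one-homogeneous function `H`. -/
lemma FinslerAux.euler {N : ℕ} {H : Euc N → ℝ} (hH : IsFinslerNorm H) {ξ : Euc N} (hξ : ξ ≠ 0) :
    ⟪gradient H ξ, ξ⟫ = H ξ := by
  have hd : DifferentiableAt ℝ H ξ :=
    (hH.smooth.contDiffAt (isOpen_compl_singleton.mem_nhds hξ)).differentiableAt (by norm_num)
  rw [FinslerAux.inner_gradient]
  have h1 : HasDerivAt (fun t : ℝ => H (t • ξ)) (fderiv ℝ H ξ ξ) 1 := by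
    have h2 : HasDerivAt (fun t : ℝ => t • ξ) ξ 1 := by
      simpa using (hasDerivAt_id (1 : ℝ)).smul_const ξ
    have h3 : HasFDerivAt H (fderiv ℝ H ξ) ((1 : ℝ) • ξ) := by simpa using hd.hasFDerivAt
    exact h3.comp_hasDerivAt 1 h2
  have h4 : HasDerivAt (fun t : ℝ => H (t • ξ)) (H ξ) 1 := by
    have h5 : HasDerivAt (fun t : ℝ => t * H ξ) (H ξ) 1 := by
      simpa using (hasDerivAt_id (1 : ℝ)).mul_const (H ξ)
    refine h5.congr_of_eventuallyEq ?_
    filter_upwards [lt_mem_nhds (zero_lt_one (α := ℝ))] with t ht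
    rw [hH.homog, abs_of_pos ht]
  exact h1.unique h4

/-! ### Nonsmooth test functions -/

lemma FinslerAux.integrableOn_of_compact {N : ℕ} {Ω K : Set (Euc N)} (hΩ : MeasurableSet Ω)
    (hK : IsCompact K) (hKΩ : K ⊆ Ω) {f : Euc N → ℝ} {C : ℝ}
    (hf : AEStronglyMeasurable f (volume.restrict Ω))
    (hC : ∀ x ∈ K, ‖f x‖ ≤ C) (h0 : ∀ x ∈ Ω, x ∉ K → f x = 0) : IntegrableOn f Ω := by
  have h1 : IntegrableOn f K := by
    refine IntegrableOn.of_bound hK.measure_lt_top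
      (hf.mono_measure (Measure.restrict_mono_set _ hKΩ)) C ?_
    filter_upwards [ae_restrict_mem hK.measurableSet] with x hx using hC x hx
  exact h1.of_forall_sdiff_eq_zero hΩ fun x hx => h0 x hx.1 hx.2

/-- Mollification: a nonnegative compactly supported `C¹` function is approximated by nonnegative
test functions, with support in a prescribed neighbourhood and uniform control of gradients. -/
lemma FinslerAux.exists_mollified {N : ℕ} {φ : Euc N → ℝ} (hφ : ContDiff ℝ 1 φ)
    (hc : HasCompactSupport φ) (h0 : ∀ x, 0 ≤ φ x) {r ε : ℝ} (hr : 0 < r) (hε : 0 < ε) :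
    ∃ ψ : Euc N → ℝ, ContDiff ℝ (⊤ : ℕ∞) ψ ∧ tsupport ψ ⊆ Metric.cthickening r (tsupport φ) ∧
      (∀ x, 0 ≤ ψ x) ∧ ∀ x, ‖gradient ψ x - gradient φ x‖ ≤ ε := by
  have hcont : Continuous (fderiv ℝ φ) := hφ.continuous_fderiv one_ne_zero
  have huc : UniformContinuous (fderiv ℝ φ) :=
    (hc.fderiv ℝ).uniformContinuous_of_continuous hcont
  obtain ⟨η, hη, hηε⟩ := Metric.uniformContinuous_iff.1 huc ε hε
  have hs : 0 < min r η := lt_min hr hη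
  let ρ : ContDiffBump (0 : Euc N) := ⟨min r η / 2, min r η, by linarith, by linarith⟩
  have hρ : ρ.rOut = min r η := rfl
  let ψ : Euc N → ℝ := ρ.normed volume ⋆[ContinuousLinearMap.lsmul ℝ ℝ, volume] φ
  have hρi : LocallyIntegrable (ρ.normed volume) (volume : Measure (Euc N)) :=
    ρ.continuous_normed.locallyIntegrable
  refine ⟨ψ, ?_, ?_, ?_, ?_⟩
  · exact ρ.hasCompactSupport_normed.contDiff_convolution_left _ ρ.contDiff_normed
      hφ.continuous.locallyIntegrable
  · refine closure_minimal ?_ Metric.isClosed_cthickening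
    refine (support_convolution_subset _).trans ?_
    rw [ρ.support_normed_eq]
    rintro _ ⟨y, hy, z, hz, rfl⟩
    refine Metric.mem_cthickening_of_dist_le _ z _ _ (subset_tsupport _ hz) ?_
    rw [mem_ball_zero_iff, hρ] at hy
    simp only [dist_eq_norm, add_sub_cancel_right]
    exact hy.le.trans (min_le_left _ _)
  · intro x
    refine integral_nonneg fun t => ?_
    simpa using mul_nonneg (ρ.nonneg_normed t) (h0 _)
  · intro x
    have hd := hc.hasFDerivAt_convolution_right (ContinuousLinearMap.lsmul ℝ ℝ) hρi hφ x
    have hL : (ContinuousLinearMap.lsmul ℝ ℝ : ℝ →L[ℝ] ℝ →L[ℝ] ℝ).precompR (Euc N)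
        = ContinuousLinearMap.lsmul ℝ ℝ := by
      ext; simp [ContinuousLinearMap.precompR]
    rw [hL] at hd
    rw [FinslerAux.norm_gradient_sub, hd.fderiv, ← dist_eq_norm]
    refine ρ.dist_normed_convolution_le hcont.aestronglyMeasurable fun y hy => ?_
    rw [Metric.mem_ball, hρ] at hy
    exact (hηε (hy.trans_le (min_le_right _ _))).le

/-- Nonnegativity of the pairing of a locally bounded field with gradients extends from smooth
to `C¹` nonnegative compactly supported test functions; the pairing is also integrable. -/
lemma FinslerAux.superharmonic_extend {N : ℕ} {Ω : Set (Euc N)} (hΩ : IsOpen Ω)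
    {V : Euc N → Euc N} (hV : Measurable V)
    (hVb : ∀ K, IsCompact K → K ⊆ Ω → ∃ M, ∀ x ∈ K, ‖V x‖ ≤ M)
    (hsuper : ∀ φ : Euc N → ℝ, IsTestFun Ω φ → (∀ x, 0 ≤ φ x) →
      0 ≤ ∫ x in Ω, ⟪V x, gradient φ x⟫)
    {φ : Euc N → ℝ} (hφ : ContDiff ℝ 1 φ) (hc : HasCompactSupport φ) (hsub : tsupport φ ⊆ Ω)
    (h0 : ∀ x, 0 ≤ φ x) :
    IntegrableOn (fun x => ⟪V x, gradient φ x⟫) Ω ∧ 0 ≤ ∫ x in Ω, ⟪V x, gradient φ x⟫ := by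
  have hc' : IsCompact (tsupport φ) := hc
  obtain ⟨r, hr, hrΩ⟩ := hc'.exists_cthickening_subset_open hΩ hsub
  set K := Metric.cthickening r (tsupport φ) with hKdef
  have hK : IsCompact K := hc'.cthickening
  obtain ⟨M, hM⟩ := hVb K hK hrΩ
  have hφK : tsupport φ ⊆ K := Metric.self_subset_cthickening _
  have hint : ∀ ψ : Euc N → ℝ, ContDiff ℝ 1 ψ → tsupport ψ ⊆ K →
      IntegrableOn (fun x => ⟪V x, gradient ψ x⟫) Ω := by
    intro ψ hψ hψK
    have hgc : Continuous (fderiv ℝ ψ) := hψ.continuous_fderiv one_ne_zero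
    obtain ⟨C, hC⟩ := hK.exists_bound_of_continuousOn hgc.continuousOn
    refine FinslerAux.integrableOn_of_compact (C := M * C) hΩ.measurableSet hK hrΩ
      (hV.inner (FinslerAux.measurable_gradient ψ)).aestronglyMeasurable ?_ ?_
    · intro x hx
      refine (norm_inner_le_norm _ _).trans ?_
      rw [FinslerAux.norm_gradient]
      exact mul_le_mul (hM x hx) (hC x hx) (norm_nonneg _) ((norm_nonneg _).trans (hM x hx))
    · intro x _ hx
      rw [FinslerAux.gradient_eq_zero (fun h => hx (hψK h)), inner_zero_right]
  refine ⟨hint φ hφ hφK, ?_⟩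
  have key : ∀ ε > 0, -(ε * (|M| * volume.real K)) ≤ ∫ x in Ω, ⟪V x, gradient φ x⟫ := by
    intro ε hε
    obtain ⟨ψ, hψ, hψK, hψ0, hψφ⟩ := FinslerAux.exists_mollified hφ hc h0 hr hε
    have hψ1 : ContDiff ℝ 1 ψ := hψ.of_le (by exact_mod_cast le_top)
    have hψc : HasCompactSupport ψ := hK.of_isClosed_subset (isClosed_tsupport _) hψK
    have h1 := hsuper ψ ⟨hψ, hψc, hψK.trans hrΩ⟩ hψ0
    have h2 : ∫ x in Ω, (⟪V x, gradient ψ x⟫ - ⟪V x, gradient φ x⟫)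
        = ∫ x in K, (⟪V x, gradient ψ x⟫ - ⟪V x, gradient φ x⟫) := by
      refine setIntegral_eq_of_subset_of_forall_sdiff_eq_zero hΩ.measurableSet hrΩ ?_
      intro x hx
      rw [FinslerAux.gradient_eq_zero (fun h => hx.2 (hψK h)),
        FinslerAux.gradient_eq_zero (fun h => hx.2 (hφK h)), sub_self]
    have h3 := norm_setIntegral_le_of_norm_le_const (μ := volume)
      (f := fun x => ⟪V x, gradient ψ x⟫ - ⟪V x, gradient φ x⟫) (C := ε * |M|)
      hK.measure_lt_top (by
        intro x hx
        rw [← inner_sub_right, mul_comm]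
        refine (norm_inner_le_norm _ _).trans ?_
        exact mul_le_mul ((hM x hx).trans (le_abs_self _)) (hψφ x) (norm_nonneg _) (abs_nonneg _))
    rw [← h2, integral_sub (hint ψ hψ1 hψK) (hint φ hφ hφK), Real.norm_eq_abs] at h3
    have := (abs_le.1 h3).2
    linarith
  refine le_of_forall_pos_lt_add fun ε hε => ?_
  have hA : 0 ≤ |M| * volume.real K := by positivity
  have := key (ε / (|M| * volume.real K + 1)) (by positivity)
  have h5 : ε / (|M| * volume.real K + 1) * (|M| * volume.real K) < ε := by
    rw [div_mul_eq_mul_div, div_lt_iff₀ (by positivity)]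
    nlinarith
  linarith

/-! ### The pointwise inequality -/

/-- Young's inequality in the form `p a^(p-1) b ≤ (p-1) a^p + b^p`. -/
lemma FinslerAux.young {p a b : ℝ} (hp : 1 < p) (ha : 0 ≤ a) (hb : 0 ≤ b) :
    p * (a ^ (p - 1) * b) ≤ (p - 1) * a ^ p + b ^ p := by
  have hp0 : 0 < p := by linarith
  have h := Real.geom_mean_le_arith_mean2_weighted (w₁ := (p - 1) / p) (w₂ := 1 / p)
    (p₁ := a ^ p) (p₂ := b ^ p) (div_nonneg (by linarith) hp0.le) (by positivity)
    (by positivity) (by positivity) (by field_simp; ring)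
  rw [← Real.rpow_mul ha, ← Real.rpow_mul hb, mul_div_cancel₀ _ hp0.ne',
    mul_div_cancel₀ _ hp0.ne', Real.rpow_one] at h
  calc _ ≤ p * ((p - 1) / p * a ^ p + 1 / p * b ^ p) := by gcongr
    _ = _ := by field_simp

/-- The pointwise inequality behind the theorem: `s = u(x)`, `d = δ(x)`, `h = H(∇δ(x))` and
`w = ∇u(x) · ∇H(∇δ(x))`; the factor multiplying `((p-1)/p)^(p-1)` on the left is the pairing of
`H(∇δ)^(p-1) ∇H(∇δ)` with `∇(|u|^p δ^(1-p))`. -/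
lemma FinslerAux.pointwise {p s d h w : ℝ} (hp : 1 < p) (hd : 0 < d) (hh : 0 ≤ h) :
    ((p - 1) / p) ^ (p - 1) * (h ^ (p - 1) * (p * |s| ^ (p - 2) * s * d ^ (1 - p) * w
        + |s| ^ p * ((1 - p) * d ^ (-p)) * h))
      ≤ |w| ^ p - ((p - 1) / p) ^ p * (|s| ^ p / d ^ p * h ^ p) := by
  have hp0 : 0 < p := by linarith
  set k := (p - 1) / p with hk
  have hk0 : 0 < k := div_pos (by linarith) hp0
  have hs : |s| ^ (p - 2) * s * w ≤ |s| ^ (p - 1) * |w| := by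
    rcases eq_or_ne s 0 with rfl | hs0
    · simp only [mul_zero, zero_mul]; positivity
    · have h1 : |s| ^ (p - 1) = |s| ^ (p - 2) * |s| := by
        rw [← Real.rpow_add_one (abs_pos.2 hs0).ne']; ring_nf
      rw [h1, mul_assoc, mul_assoc, ← abs_mul]
      gcongr
      exact le_abs_self _
  set a := |s| / d * h with ha
  have ha0 : 0 ≤ a := by positivity
  have hap : |s| ^ p / d ^ p * h ^ p = a ^ p := by
    rw [ha, Real.mul_rpow (by positivity) hh, Real.div_rpow (abs_nonneg _) hd.le]
  have hap1 : |s| ^ (p - 1) * d ^ (1 - p) * h ^ (p - 1) = a ^ (p - 1) := by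
    rw [ha, Real.mul_rpow (by positivity) hh, Real.div_rpow (abs_nonneg _) hd.le,
      show 1 - p = -(p - 1) by ring, Real.rpow_neg hd.le, div_eq_mul_inv]
  have hhp : h ^ (p - 1) * h = h ^ p := by
    rw [← Real.rpow_add_one' hh (by linarith)]; ring_nf
  have hkp : k ^ (p - 1) * k = k ^ p := by
    rw [← Real.rpow_add_one' hk0.le (by linarith)]; ring_nf
  have hdp : |s| ^ p * d ^ (-p) * h ^ p = a ^ p := by
    rw [← hap, Real.rpow_neg hd.le, div_eq_mul_inv]
  have hy := FinslerAux.young hp (mul_nonneg hk0.le ha0) (abs_nonneg w)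
  rw [Real.mul_rpow hk0.le ha0, Real.mul_rpow hk0.le ha0] at hy
  have hkk : (p - 1) = p * k := by rw [hk]; field_simp
  rw [hap]
  have hfirst : h ^ (p - 1) * (p * |s| ^ (p - 2) * s * d ^ (1 - p) * w
        + |s| ^ p * ((1 - p) * d ^ (-p)) * h) ≤ p * (a ^ (p - 1) * |w|) - (p - 1) * a ^ p := by
    rw [← hdp, ← hap1, ← hhp]
    have : (h ^ (p - 1) * p * d ^ (1 - p)) * (|s| ^ (p - 2) * s * w)
      ≤ (h ^ (p - 1) * p * d ^ (1 - p)) * (|s| ^ (p - 1) * |w|) := by gcongr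
    linarith
  have h6 := mul_le_mul_of_nonneg_left hfirst (Real.rpow_nonneg hk0.le (p - 1))
  refine h6.trans ?_
  have h7 : k ^ (p - 1) * (p - 1) = p * k ^ p := by
    rw [← hkp]; nth_rewrite 2 [hkk]; ring
  have h8 : (p - 1) * (k ^ p * a ^ p) = p * (k ^ p * a ^ p) - k ^ p * a ^ p := by ring
  have h9 : k ^ (p - 1) * ((p - 1) * a ^ p) = p * (k ^ p * a ^ p) := by
    rw [← mul_assoc, h7]; ring
  nlinarith

end FinslerAux

open scoped Classical in
/-- Anisotropic L^p-Hardy inequality of geometric type, for a positive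
C¹ function δ which is Δ_{H,p}-superharmonic in the distributional sense. -/
theorem finsler_hardy_geometric
    (N : ℕ) (hN : 2 ≤ N) (H : Euc N → ℝ) (hH : IsFinslerNorm H)
    (p : ℝ) (hp : 1 < p)
    (Ω : Set (Euc N)) (hΩopen : IsOpen Ω) (hΩconn : IsConnected Ω)
    (δ : Euc N → ℝ) (hδ : ContDiffOn ℝ 1 δ Ω) (hδpos : ∀ x ∈ Ω, 0 < δ x)
    (hsuper : ∀ φ : Euc N → ℝ, IsTestFun Ω φ → (∀ x, 0 ≤ φ x) →
      0 ≤ ∫ x in Ω, ⟪(if gradient δ x = 0 then 0 else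
            H (gradient δ x) ^ (p - 1) • gradient H (gradient δ x)), gradient φ x⟫)
    (u : Euc N → ℝ) (hu : IsTestFun Ω u) :
    ((p - 1) / p) ^ p * ∫ x in Ω, |u x| ^ p / δ x ^ p * H (gradient δ x) ^ p
      ≤ ∫ x in Ω, (if gradient δ x = 0 then 0 else
          |⟪gradient u x, gradient H (gradient δ x)⟫| ^ p) := by
  have hp0 : 0 < p := by linarith
  obtain ⟨hu1, hu2, hu3⟩ := hu
  have hu1' : ContDiff ℝ 1 u := hu1.of_le (by exact_mod_cast le_top)
  have hKc : IsCompact (tsupport u) := hu2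
  obtain ⟨C, hC⟩ := FinslerAux.exists_lipschitz hH
  have hHc : Continuous H := hC.continuous
  have hgH : ∀ ξ, ‖gradient H ξ‖ ≤ C := fun ξ => by
    rw [FinslerAux.norm_gradient]; exact norm_fderiv_le_of_lipschitz ℝ hC
  have hgδ : ContinuousOn (gradient δ) Ω :=
    (InnerProductSpace.toDual ℝ (Euc N)).symm.continuous.comp_continuousOn
      (hδ.continuousOn_fderiv_of_isOpen hΩopen le_rfl)
  have hgδm : Measurable (gradient δ) := FinslerAux.measurable_gradient δ
  have hgHm : Measurable (fun x => gradient H (gradient δ x)) :=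
    (FinslerAux.measurable_gradient H).comp hgδm
  have hSm : MeasurableSet {x | gradient δ x = 0} := hgδm (measurableSet_singleton 0)
  set V : Euc N → Euc N := fun x => if gradient δ x = 0 then 0 else
            H (gradient δ x) ^ (p - 1) • gradient H (gradient δ x) with hVdef
  have hVm : Measurable V :=
    Measurable.ite hSm measurable_const
      (((hHc.measurable.comp hgδm).pow_const (p - 1)).smul hgHm)
  have hVb : ∀ K, IsCompact K → K ⊆ Ω → ∃ M, ∀ x ∈ K, ‖V x‖ ≤ M := by
    intro K hK hKΩ
    have hcont : ContinuousOn (fun x => H (gradient δ x) ^ (p - 1)) K :=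
      (hHc.comp_continuousOn (hgδ.mono hKΩ)).rpow_const fun x _ => Or.inr (by linarith)
    obtain ⟨B, hB⟩ := hK.exists_bound_of_continuousOn hcont
    refine ⟨B * C, fun x hx => ?_⟩
    have hB0 : 0 ≤ B := (norm_nonneg _).trans (hB x hx)
    simp only [hVdef]
    split_ifs
    · rw [norm_zero]; positivity
    · rw [norm_smul]
      exact mul_le_mul (hB x hx) (hgH _) (norm_nonneg _) hB0
  -- `|u|^p` is `C¹` because `p > 1`; outside `Ω` the values of `δ` are irrelevant as `u = 0` there.
  set φ : Euc N → ℝ := fun x => |u x| ^ p * δ x ^ (1 - p) with hφdef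
  have hφsub : tsupport φ ⊆ tsupport u := by
    refine closure_mono fun x hx hux => hx ?_
    simp only [hφdef, hux, abs_zero, Real.zero_rpow hp0.ne', zero_mul]
  have hφ1 : ContDiff ℝ 1 φ := by
    rw [contDiff_iff_contDiffAt]
    intro x
    by_cases hx : x ∈ tsupport u
    · have h1 : ContDiffAt ℝ 1 (fun x => |u x| ^ p) x := (hu1'.norm_rpow hp).contDiffAt
      have h2 : ContDiffAt ℝ 1 δ x := hδ.contDiffAt (hΩopen.mem_nhds (hu3 hx))
      exact h1.mul (h2.rpow_const_of_ne (hδpos x (hu3 hx)).ne')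
    · have h1 : φ =ᶠ[𝓝 x] fun _ => 0 :=
        notMem_tsupport_iff_eventuallyEq.1 fun h => hx (hφsub h)
      exact contDiffAt_const.congr_of_eventuallyEq h1
  have hφc : HasCompactSupport φ := hKc.of_isClosed_subset (isClosed_tsupport _) hφsub
  have hφ0 : ∀ x ∈ Ω, 0 ≤ φ x := fun x hx =>
    mul_nonneg (by positivity) (Real.rpow_nonneg (hδpos x hx).le _)
  have hφ0' : ∀ x, 0 ≤ φ x := by
    intro x
    by_cases hx : x ∈ Ω
    · exact hφ0 x hx
    · exact (image_eq_zero_of_notMem_tsupport fun h => hx (hu3 (hφsub h))).ge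
  obtain ⟨hφi, hφnn⟩ := FinslerAux.superharmonic_extend hΩopen hVm hVb hsuper hφ1 hφc
    (hφsub.trans hu3) hφ0'
  have hderiv : ∀ x ∈ Ω, ∀ v, ⟪gradient φ x, v⟫ =
      p * |u x| ^ (p - 2) * u x * δ x ^ (1 - p) * ⟪gradient u x, v⟫
        + |u x| ^ p * ((1 - p) * δ x ^ (-p)) * ⟪gradient δ x, v⟫ := by
    intro x hx v
    have h1 : HasFDerivAt u (fderiv ℝ u x) x :=
      (hu1'.differentiable one_ne_zero x).hasFDerivAt
    have h2 : HasFDerivAt δ (fderiv ℝ δ x) x :=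
      ((hδ.contDiffAt (hΩopen.mem_nhds hx)).differentiableAt one_ne_zero).hasFDerivAt
    have h3 := (hasDerivAt_abs_rpow (u x) hp).comp_hasFDerivAt x h1
    have h4 := (Real.hasDerivAt_rpow_const (p := 1 - p) (Or.inl (hδpos x hx).ne')).comp_hasFDerivAt
      x h2
    have h5 : HasFDerivAt φ _ x := h3.mul h4
    simp only [FinslerAux.inner_gradient, h5.fderiv]
    simp only [Function.comp_apply, add_apply, smul_apply,
      smul_eq_mul, show 1 - p - 1 = -p by ring]
    ring
  have hAi : IntegrableOn (fun x => |u x| ^ p / δ x ^ p * H (gradient δ x) ^ p) Ω := by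
    have hcont : ContinuousOn (fun x => |u x| ^ p / δ x ^ p * H (gradient δ x) ^ p) Ω := by
      refine ContinuousOn.mul (ContinuousOn.div ?_ ?_ ?_) ?_
      · exact (hu1.continuous.abs.rpow_const fun x => Or.inr hp0.le).continuousOn
      · exact hδ.continuousOn.rpow_const fun x hx => Or.inl (hδpos x hx).ne'
      · exact fun x hx => (Real.rpow_pos_of_pos (hδpos x hx) _).ne'
      · exact (hHc.comp_continuousOn hgδ).rpow_const fun x _ => Or.inr hp0.le
    obtain ⟨B, hB⟩ := hKc.exists_bound_of_continuousOn (hcont.mono hu3)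
    refine FinslerAux.integrableOn_of_compact hΩopen.measurableSet hKc hu3
      (hcont.aestronglyMeasurable hΩopen.measurableSet) hB fun x _ hx => ?_
    rw [image_eq_zero_of_notMem_tsupport hx, abs_zero, Real.zero_rpow hp0.ne', zero_div, zero_mul]
  have hBi : IntegrableOn (fun x => if gradient δ x = 0 then 0 else
          |⟪gradient u x, gradient H (gradient δ x)⟫| ^ p) Ω := by
    obtain ⟨B, hB⟩ := hKc.exists_bound_of_continuousOn
      (hu1'.continuous_fderiv one_ne_zero).continuousOn
    have hm : Measurable (fun x => if gradient δ x = 0 then 0 else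
          |⟪gradient u x, gradient H (gradient δ x)⟫| ^ p) := by
      refine Measurable.ite hSm measurable_const ?_
      have h1 : Measurable fun x => ⟪gradient u x, gradient H (gradient δ x)⟫ :=
        (FinslerAux.measurable_gradient u).inner hgHm
      have h2 : Measurable fun x => |⟪gradient u x, gradient H (gradient δ x)⟫| :=
        continuous_abs.measurable.comp h1
      exact h2.pow_const p
    refine FinslerAux.integrableOn_of_compact (C := (B * C) ^ p) hΩopen.measurableSet hKc hu3
      hm.aestronglyMeasurable ?_ ?_
    · intro x hx
      have hB0 : 0 ≤ B := (norm_nonneg _).trans (hB x hx)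
      split_ifs
      · rw [norm_zero]; positivity
      · rw [Real.norm_of_nonneg (by positivity)]
        refine Real.rpow_le_rpow (abs_nonneg _) ?_ hp0.le
        refine (abs_real_inner_le_norm _ _).trans ?_
        rw [FinslerAux.norm_gradient u]
        exact mul_le_mul (hB x hx) (hgH _) (norm_nonneg _) hB0
    · intro x _ hx
      rw [FinslerAux.gradient_eq_zero hx, inner_zero_left, abs_zero, Real.zero_rpow hp0.ne', ite_self]
  have hpt : ∀ x ∈ Ω, ((p - 1) / p) ^ (p - 1) * ⟪V x, gradient φ x⟫ ≤
      (if gradient δ x = 0 then 0 else |⟪gradient u x, gradient H (gradient δ x)⟫| ^ p)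
        - ((p - 1) / p) ^ p * (|u x| ^ p / δ x ^ p * H (gradient δ x) ^ p) := by
    intro x hx
    by_cases h0 : gradient δ x = 0
    · have hH0 : H 0 = 0 := by simpa using hH.homog 0 0
      simp [hVdef, h0, hH0, Real.zero_rpow hp0.ne']
    · have h1 := FinslerAux.pointwise (s := u x) (w := ⟪gradient u x, gradient H (gradient δ x)⟫)
        hp (hδpos x hx) (hH.nonneg (gradient δ x))
      have h2 : ⟪gradient δ x, gradient H (gradient δ x)⟫ = H (gradient δ x) := by
        rw [real_inner_comm, FinslerAux.euler hH h0]
      have h3 : ⟪V x, gradient φ x⟫ = H (gradient δ x) ^ (p - 1) *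
          ⟪gradient φ x, gradient H (gradient δ x)⟫ := by
        simp only [hVdef, if_neg h0]
        rw [real_inner_smul_left, real_inner_comm]
      rw [h3, hderiv x hx, h2, if_neg h0]
      exact h1
  have hfin := setIntegral_mono_on (hφi.const_mul (((p - 1) / p) ^ (p - 1)))
    (hBi.sub (hAi.const_mul (((p - 1) / p) ^ p))) hΩopen.measurableSet hpt
  have h1 : 0 ≤ ((p - 1) / p) ^ (p - 1) * ∫ x in Ω, ⟪V x, gradient φ x⟫ :=
    mul_nonneg (Real.rpow_nonneg (div_nonneg (by linarith) hp0.le) _) hφnn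
  rw [integral_const_mul] at hfin
  have h2 := integral_sub hBi (hAi.const_mul (((p - 1) / p) ^ p))
  rw [integral_const_mul] at h2
  have h3 := h1.trans (hfin.trans h2.le)
  linarith
end
end

section
/- Let N ≥ 2, 1 < p < ∞, and let ℝ^N_+ = { x = (x', x_N) ∈ ℝ^N : x_N > 0 } be the half-space, with anisotropic distance to the boundary d_H(x) = inf { H⁰(x − y) : y ∈ ℝ^N, y_N = 0 } (so that d_H is a positive linear function of x_N on ℝ^N_+, everywhere differentiable, with H(∇d_H) = 1). Then for every u ∈ C_c^∞(ℝ^N_+), ((p−1)/p)^p · ∫_{ℝ^N_+} |u(x)|^p / d_H(x)^p dx ≤ ∫_{ℝ^N_+} |∇u(x) · (∇_ξ H)(∇d_H(x))|^p dx. -/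
/-!
Write `e` for the last coordinate vector rescaled so that `H e = 1`, and `w = ∇H(e)`. Since `H` is
sublinear, `⟪w, ξ⟫ ≤ H ξ` for all `ξ`, and Euler's identity gives `⟪w, e⟫ = 1`; hence the polar norm
of `w` is at most one (`polarNorm_smul_le`). Testing the polar norm against `e` bounds the distance
to the hyperplane from below by `⟪e, x⟫`, and moving from `x` in the direction `-w` until the
hyperplane is reached shows that this bound is attained. So `dH x = ⟪e, x⟫` on the half-space
(`dist_eq`), `∇dH = e`, and the right-hand side is the `p`-th power integral of the derivative
`∂_w u`.

What remains is a Hardy inequality in the direction `w` for the weight `d x = ⟪e, x⟫`, for which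
`∂_w d = 1` (`hardy_directional`). With `κ = (p - 1) / p`, `a = |u| / d` and `b = ∂_w u`, Young's
inequality (the tangent line inequality for `|·| ^ p` at `κ a`) gives pointwise
`κ ^ p * a ^ p + κ ^ (p - 1) * ∂_w (|u| ^ p * d ^ (1 - p)) ≤ |b| ^ p`, and the derivative term, having
compact support, integrates to zero.
-/

open MeasureTheory Set Filter
open scoped RealInnerProductSpace Topology ENNReal NNReal

noncomputable section

/-! ### The polar norm and the anisotropic distance -/

section Finsler

variable {N : ℕ} {H : Euc N → ℝ}

lemma IsFinslerNorm.pos (hH : IsFinslerNorm H) {ξ : Euc N} (hξ : ξ ≠ 0) : 0 < H ξ := by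
  obtain ⟨a, b, ha, -, h⟩ := hH.bounds
  exact lt_of_lt_of_le (mul_pos ha (norm_pos_iff.2 hξ)) (h ξ).1

lemma IsFinslerNorm.add_le (hH : IsFinslerNorm H) (x y : Euc N) : H (x + y) ≤ H x + H y := by
  have h := hH.convexOn.2 (mem_univ x) (mem_univ y)
    (show (0 : ℝ) ≤ 1 / 2 by norm_num) (show (0 : ℝ) ≤ 1 / 2 by norm_num) (by norm_num)
  rw [← smul_add, hH.homog] at h
  rw [abs_of_pos (by norm_num)] at h
  simp only [smul_eq_mul] at h
  linarith

lemma IsFinslerNorm.differentiableAt (hH : IsFinslerNorm H) {ξ : Euc N} (hξ : ξ ≠ 0) :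
    DifferentiableAt ℝ H ξ :=
  (hH.smooth.differentiableOn (by norm_num)).differentiableAt
    (isOpen_compl_singleton.mem_nhds hξ)

lemma IsFinslerNorm.hasDerivAt_line (hH : IsFinslerNorm H) {e : Euc N} (he : e ≠ 0) (ξ : Euc N) :
    HasDerivAt (fun t : ℝ => H (e + t • ξ)) ⟪gradient H e, ξ⟫ 0 := by
  have h := (hH.differentiableAt he).hasGradientAt.hasFDerivAt.hasLineDerivAt ξ
  simpa [HasLineDerivAt] using h

lemma IsFinslerNorm.inner_gradient_le (hH : IsFinslerNorm H) {e : Euc N} (he : e ≠ 0)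
    (ξ : Euc N) : ⟪gradient H e, ξ⟫ ≤ H ξ := by
  have h := (hH.hasDerivAt_line he ξ).tendsto_slope_zero_right
  refine le_of_tendsto h ?_
  filter_upwards [self_mem_nhdsWithin] with t ht
  have ht : 0 < t := ht
  have h1 := hH.add_le e (t • ξ)
  rw [hH.homog, abs_of_pos ht] at h1
  simp only [zero_add, zero_smul, add_zero, smul_eq_mul]
  rw [inv_mul_le_iff₀ ht]
  linarith

/-- Euler's identity for the one-homogeneous function `H`. -/
lemma IsFinslerNorm.inner_gradient_self (hH : IsFinslerNorm H) {e : Euc N} (he : e ≠ 0) :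
    ⟪gradient H e, e⟫ = H e := by
  refine (hH.hasDerivAt_line he e).unique ?_
  have h : HasDerivAt (fun t : ℝ => (1 + t) * H e) (H e) 0 := by
    simpa using ((hasDerivAt_id (0 : ℝ)).const_add 1).mul_const (H e)
  refine h.congr_of_eventuallyEq ?_
  filter_upwards [lt_mem_nhds (show (-1 : ℝ) < 0 by norm_num)] with t ht
  rw [show e + t • e = (1 + t) • e by rw [add_smul, one_smul], hH.homog, abs_of_pos (by linarith)]

/-- The supremum defining the polar norm is taken over a bounded set, so it is not a junk value. -/
lemma IsFinslerNorm.inner_le_polarNorm (hH : IsFinslerNorm H) {ξ : Euc N} (hξ : ξ ≠ 0)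
    (x : Euc N) : ⟪ξ, x⟫ / H ξ ≤ polarNorm H x := by
  obtain ⟨a, b, ha, -, h⟩ := hH.bounds
  refine le_csSup ⟨‖x‖ / a, ?_⟩ ⟨ξ, hξ, rfl⟩
  rintro r ⟨η, hη, rfl⟩
  rw [div_le_div_iff₀ (hH.pos hη) ha]
  calc ⟪η, x⟫ * a ≤ (‖η‖ * ‖x‖) * a := by gcongr; exact real_inner_le_norm η x
    _ = ‖x‖ * (a * ‖η‖) := by ring
    _ ≤ ‖x‖ * H η := by gcongr; exact (h η).1

lemma IsFinslerNorm.polarNorm_smul_le (hH : IsFinslerNorm H) {e : Euc N} (he : e ≠ 0)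
    {s : ℝ} (hs : 0 ≤ s) : polarNorm H (s • gradient H e) ≤ s := by
  refine csSup_le ⟨_, e, he, rfl⟩ ?_
  rintro r ⟨ξ, hξ, rfl⟩
  rw [div_le_iff₀ (hH.pos hξ), inner_smul_right, real_inner_comm]
  gcongr
  exact hH.inner_gradient_le he ξ

/-- The anisotropic distance to the hyperplane `{y | y i = 0}` is linear on the side `0 ≤ x i`:
it is the inner product with the normal vector `e` of `H`-length one. -/
lemma IsFinslerNorm.dist_eq (hH : IsFinslerNorm H) {e : Euc N} (he : e ≠ 0) (hHe : H e = 1)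
    {i : Fin N} {c : ℝ} (hc : 0 < c) (hei : ∀ x : Euc N, ⟪e, x⟫ = c * x i)
    {x : Euc N} (hx : 0 ≤ x i) :
    sInf {r : ℝ | ∃ y : Euc N, y i = 0 ∧ r = polarNorm H (x - y)} = ⟪e, x⟫ := by
  have lower : ∀ r ∈ {r : ℝ | ∃ y : Euc N, y i = 0 ∧ r = polarNorm H (x - y)}, ⟪e, x⟫ ≤ r := by
    rintro r ⟨y, hy, rfl⟩
    have h := hH.inner_le_polarNorm he (x - y)
    rwa [hHe, div_one, inner_sub_right, hei y, hy, mul_zero, sub_zero] at h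
  have hs : 0 ≤ ⟪e, x⟫ := by rw [hei]; positivity
  have hmem : polarNorm H (x - (x - ⟪e, x⟫ • gradient H e)) ∈
      {r : ℝ | ∃ y : Euc N, y i = 0 ∧ r = polarNorm H (x - y)} := by
    refine ⟨_, ?_, rfl⟩
    have h : ⟪e, x - ⟪e, x⟫ • gradient H e⟫ = 0 := by
      rw [inner_sub_right, inner_smul_right, real_inner_comm (gradient H e) e,
        hH.inner_gradient_self he, hHe]
      ring
    rw [hei] at h
    exact (mul_eq_zero.1 h).resolve_left hc.ne'
  refine le_antisymm ((csInf_le ⟨_, lower⟩ hmem).trans ?_) (le_csInf ⟨_, hmem⟩ lower)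
  rw [sub_sub_cancel]
  exact hH.polarNorm_smul_le he hs

end Finsler

/-! ### The directional Hardy inequality -/

lemma tangent_line_rpow {p : ℝ} (hp : 1 < p) {t : ℝ} (ht : 0 ≤ t) (b : ℝ) :
    t ^ p + p * (t ^ (p - 1) * |b| - t ^ p) ≤ |b| ^ p := by
  have hp0 : 0 < p := by linarith
  have hpq := Real.HolderConjugate.conjExponent hp
  have h := Real.young_inequality_of_nonneg (abs_nonneg b) (Real.rpow_nonneg ht (p - 1)) hpq
  have hq : (t ^ (p - 1)) ^ (Real.conjExponent p) = t ^ p := by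
    rw [← Real.rpow_mul ht, Real.conjExponent, mul_div_cancel₀ _ (by linarith : p - 1 ≠ 0)]
  rw [hq, Real.conjExponent] at h
  have h2 := mul_le_mul_of_nonneg_left h hp0.le
  have h3 : p * (|b| ^ p / p + t ^ p / (p / (p - 1))) = |b| ^ p + (p - 1) * t ^ p := by
    field_simp
  rw [h3] at h2
  linarith

/-- The pointwise inequality behind the Hardy inequality; the factor of `((p - 1) / p) ^ (p - 1)`
is the derivative of `|u| ^ p * d ^ (1 - p)` along a curve with `u' = b` and `d' = 1`. -/
lemma hardy_pointwise {p : ℝ} (hp : 1 < p) (u b : ℝ) {d : ℝ} (hd : 0 < d) :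
    ((p - 1) / p) ^ p * (|u| ^ p / d ^ p) + ((p - 1) / p) ^ (p - 1) *
      (p * |u| ^ (p - 2) * u * b * d ^ (1 - p) + |u| ^ p * ((1 - p) * d ^ (-p))) ≤ |b| ^ p := by
  have hp0 : 0 < p := by linarith
  have hκ : 0 < (p - 1) / p := div_pos (by linarith) hp0
  set κ := (p - 1) / p with hκd
  set a := |u| / d with had
  have ha : 0 ≤ a := by positivity
  have h := tangent_line_rpow hp (mul_nonneg hκ.le ha) b
  rw [Real.mul_rpow hκ.le ha, Real.mul_rpow hκ.le ha] at h
  have hap : |u| ^ p / d ^ p = a ^ p := by rw [had, Real.div_rpow (abs_nonneg u) hd.le]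
  have hap' : |u| ^ p * d ^ (-p) = a ^ p := by rw [← hap, Real.rpow_neg hd.le]; rfl
  have hs : |u| ^ (p - 2) * u * b * d ^ (1 - p) ≤ a ^ (p - 1) * |b| := by
    have h1 : a ^ (p - 1) = |u| ^ (p - 2) * |u| * d ^ (1 - p) := by
      rw [had, Real.div_rpow (abs_nonneg u) hd.le, show 1 - p = -(p - 1) by ring,
        Real.rpow_neg hd.le, div_eq_mul_inv]
      congr 1
      rcases eq_or_ne u 0 with rfl | hu
      · simp [Real.zero_rpow (by linarith : p - 1 ≠ 0)]
      · rw [← Real.rpow_add_one (abs_ne_zero.2 hu)]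
        congr 1
        ring
    rw [h1]
    calc |u| ^ (p - 2) * u * b * d ^ (1 - p) = |u| ^ (p - 2) * d ^ (1 - p) * (u * b) := by ring
      _ ≤ |u| ^ (p - 2) * d ^ (1 - p) * (|u| * |b|) := by
        refine mul_le_mul_of_nonneg_left ?_ (by positivity)
        rw [← abs_mul]
        exact le_abs_self _
      _ = _ := by ring
  have hκp : κ ^ p = κ ^ (p - 1) * κ := by
    rw [← Real.rpow_add_one hκ.ne']
    congr 1
    ring
  have hpκ : p * κ = p - 1 := by rw [hκd]; field_simp
  have hmul := mul_le_mul_of_nonneg_left hs (by positivity : 0 ≤ κ ^ (p - 1) * p)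
  calc _ = κ ^ p * a ^ p + κ ^ (p - 1) * p * (|u| ^ (p - 2) * u * b * d ^ (1 - p))
        - κ ^ (p - 1) * (p - 1) * (|u| ^ p * d ^ (-p)) := by rw [hap]; ring
    _ ≤ κ ^ p * a ^ p + κ ^ (p - 1) * p * (a ^ (p - 1) * |b|)
        - κ ^ (p - 1) * (p - 1) * a ^ p := by rw [hap']; linarith
    _ = κ ^ p * a ^ p + p * (κ ^ (p - 1) * a ^ (p - 1) * |b| - κ ^ p * a ^ p) := by
      rw [hκp]; linear_combination (κ ^ (p - 1) * a ^ p) * hpκ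
    _ ≤ |b| ^ p := h

/-- Hardy's inequality for the derivative in the direction `w` and the weight `⟪e, x⟫`, when that
weight has derivative one along `w`. -/
lemma hardy_directional {N : ℕ} {p : ℝ} (hp : 1 < p) {e w : Euc N} (hew : ⟪e, w⟫ = 1)
    {u : Euc N → ℝ} (hu : IsTestFun {x | 0 < ⟪e, x⟫} u) :
    ((p - 1) / p) ^ p * ∫ x in {x : Euc N | 0 < ⟪e, x⟫}, |u x| ^ p / ⟪e, x⟫ ^ p
      ≤ ∫ x in {x : Euc N | 0 < ⟪e, x⟫}, |⟪gradient u x, w⟫| ^ p := by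
  obtain ⟨hsm, hcs, hsub⟩ := hu
  have hp0 : 0 < p := by linarith
  have hdiff : Differentiable ℝ u := hsm.differentiable (by simp)
  have hgrad : ∀ x, ⟪gradient u x, w⟫ = fderiv ℝ u x w := fun x => by simp [gradient]
  simp_rw [hgrad]
  have hu0 : ∀ x, x ∉ tsupport u → u x = 0 := fun x hx => image_eq_zero_of_notMem_tsupport hx
  have hloc : ∀ x, x ∉ tsupport u → u =ᶠ[𝓝 x] 0 := fun x hx =>
    notMem_tsupport_iff_eventuallyEq.1 hx
  have hdu0 : ∀ x, x ∉ tsupport u → fderiv ℝ u x w = 0 := fun x hx => by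
    rw [(hloc x hx).fderiv_eq]; simp
  have hcd : Continuous fun x => fderiv ℝ u x w :=
    (hsm.continuous_fderiv (by simp)).clm_apply continuous_const
  have hcu : Continuous u := hsm.continuous
  -- integrability of every integrand below: continuous on the half-space, zero off `tsupport u`
  have hint : ∀ f : Euc N → ℝ, ContinuousOn f {x | 0 < ⟪e, x⟫} → (∀ x, x ∉ tsupport u → f x = 0) →
      Integrable f := by
    intro f hf hf0
    refine (integrableOn_iff_integrable_of_support_subset (s := tsupport u) ?_).1
      ((hf.mono hsub).integrableOn_compact hcs)
    intro x hx
    by_contra hxn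
    exact hx (hf0 x hxn)
  have hcpow : Continuous fun x => |u x| ^ p := hcu.abs.rpow_const fun _ => Or.inr hp0.le
  have hcd_inner : Continuous fun x : Euc N => ⟪e, x⟫ := by fun_prop
  have hcrpow : ∀ r : ℝ, ContinuousOn (fun x : Euc N => ⟪e, x⟫ ^ r) {x | 0 < ⟪e, x⟫} := fun r =>
    hcd_inner.continuousOn.rpow_const fun x hx => Or.inl (ne_of_gt hx)
  have hphi : Continuous fun y : ℝ => p * |y| ^ (p - 2) * y := by
    have h := (contDiff_norm_rpow (E := ℝ) hp).continuous_deriv (by norm_num)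
    convert h using 2 with y
    exact (hasDerivAt_norm_rpow y hp).deriv.symm
  set F : Euc N → ℝ := fun x => |u x| ^ p * ⟪e, x⟫ ^ (1 - p) with hF
  set F' : Euc N → ℝ := fun x => p * |u x| ^ (p - 2) * u x * fderiv ℝ u x w * ⟪e, x⟫ ^ (1 - p)
    + |u x| ^ p * ((1 - p) * ⟪e, x⟫ ^ (-p)) with hF'
  have hF0 : ∀ x, x ∉ tsupport u → F x = 0 := fun x hx => by
    simp [hF, hu0 x hx, Real.zero_rpow hp0.ne']
  have hF'0 : ∀ x, x ∉ tsupport u → F' x = 0 := fun x hx => by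
    simp [hF', hu0 x hx, Real.zero_rpow hp0.ne']
  have hFint : Integrable F := hint F (hcpow.continuousOn.mul (hcrpow _)) hF0
  have hF'int : Integrable F' := by
    refine hint F' ?_ hF'0
    refine ContinuousOn.add ?_ (hcpow.continuousOn.mul (continuousOn_const.mul (hcrpow _)))
    exact (((hphi.comp hcu).mul hcd).continuousOn).mul (hcrpow _)
  have hder : ∀ x, HasLineDerivAt ℝ F (F' x) x w := by
    intro x
    by_cases hx : x ∈ tsupport u
    · have hd : 0 < ⟪e, x⟫ := hsub hx
      have h1 : HasDerivAt (fun t : ℝ => u (x + t • w)) (fderiv ℝ u x w) 0 :=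
        (hdiff x).hasFDerivAt.hasLineDerivAt w
      have h2 : HasDerivAt (fun t : ℝ => |u (x + t • w)| ^ p)
          (p * |u x| ^ (p - 2) * u x * fderiv ℝ u x w) 0 := by
        have h := HasDerivAt.comp (0 : ℝ) (hasDerivAt_abs_rpow (u (x + (0 : ℝ) • w)) hp) h1
        simpa [Function.comp_def] using h
      have h3 : HasDerivAt (fun t : ℝ => ⟪e, x + t • w⟫) 1 0 := by
        simp only [inner_add_right, inner_smul_right, hew, mul_one]
        exact (hasDerivAt_id (0 : ℝ)).const_add _
      have h4 := h3.rpow_const (p := 1 - p) (Or.inl (by simpa using hd.ne'))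
      have h5 := h2.mul h4
      refine HasDerivAt.congr_deriv h5 ?_
      simp only [hF', zero_smul, add_zero, one_mul]
      rw [show 1 - p - 1 = -p by ring]
    · have hFz : F =ᶠ[𝓝 x] fun _ => 0 := by
        filter_upwards [hloc x hx] with y hy
        simp [hF, hy, Real.zero_rpow hp0.ne']
      rw [hF'0 x hx]
      have h := ((hasFDerivAt_const (𝕜 := ℝ) (0 : ℝ) x).congr_of_eventuallyEq hFz).hasLineDerivAt w
      simpa using h
  have hzero : ∫ x, F' x = 0 := by
    have h := integral_bilinear_hasLineDerivAt_right_eq_neg_left_of_integrable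
      (μ := (volume : Measure (Euc N)))
      (f := F) (f' := F') (g := fun _ => (1 : ℝ)) (g' := fun _ => (0 : ℝ)) (v := w)
      (B := ContinuousLinearMap.mul ℝ ℝ) (by simpa using hF'int) (by simp)
      (by simpa using hFint) (fun x _ => hder x)
      (fun x _ => by simpa [HasLineDerivAt] using hasDerivAt_const (0 : ℝ) (1 : ℝ))
    simpa using h
  have hnot : ∀ x, x ∉ {x : Euc N | 0 < ⟪e, x⟫} → x ∉ tsupport u := fun x hx h => hx (hsub h)
  have hL0 : ∀ x, x ∉ tsupport u → |u x| ^ p / ⟪e, x⟫ ^ p = 0 := fun x hx => by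
    simp [hu0 x hx, Real.zero_rpow hp0.ne']
  have hR0 : ∀ x, x ∉ tsupport u → |fderiv ℝ u x w| ^ p = 0 := fun x hx => by
    simp [hdu0 x hx, Real.zero_rpow hp0.ne']
  rw [setIntegral_eq_integral_of_forall_compl_eq_zero fun x hx => hL0 x (hnot x hx),
    setIntegral_eq_integral_of_forall_compl_eq_zero fun x hx => hR0 x (hnot x hx)]
  have hLint : Integrable fun x => |u x| ^ p / ⟪e, x⟫ ^ p := by
    refine hint _ (hcpow.continuousOn.div (hcrpow _) fun x hx => ?_) hL0
    exact (Real.rpow_pos_of_pos hx p).ne'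
  have hRint : Integrable fun x => |fderiv ℝ u x w| ^ p :=
    hint _ (hcd.abs.rpow_const fun _ => Or.inr hp0.le).continuousOn hR0
  calc ((p - 1) / p) ^ p * ∫ x, |u x| ^ p / ⟪e, x⟫ ^ p
      = ∫ x, (((p - 1) / p) ^ p * (|u x| ^ p / ⟪e, x⟫ ^ p) + ((p - 1) / p) ^ (p - 1) * F' x) := by
        rw [integral_add (hLint.const_mul _) (hF'int.const_mul _), integral_const_mul,
          integral_const_mul, hzero, mul_zero, add_zero]
    _ ≤ ∫ x, |fderiv ℝ u x w| ^ p := by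
        refine integral_mono ((hLint.const_mul _).add (hF'int.const_mul _)) hRint fun x => ?_
        by_cases hx : x ∈ tsupport u
        · exact hardy_pointwise hp (u x) (fderiv ℝ u x w) (hsub hx)
        · simp only [hL0 x hx, hF'0 x hx, hR0 x hx, mul_zero, add_zero, le_refl]

/-- Anisotropic Hardy inequality on the half-space. -/
theorem finsler_hardy_halfspace
    (N : ℕ) (hN : 2 ≤ N) (H : Euc N → ℝ) (hH : IsFinslerNorm H)
    (p : ℝ) (hp : 1 < p)
    (halfspace : Set (Euc N))
    (hhs : halfspace = {x : Euc N | 0 < x ⟨N - 1, by omega⟩})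
    (dH : Euc N → ℝ)
    (hdH : ∀ x, dH x = sInf {r : ℝ | ∃ y : Euc N,
        y ⟨N - 1, by omega⟩ = 0 ∧ r = polarNorm H (x - y)})
    (u : Euc N → ℝ) (hu : IsTestFun halfspace u) :
    ((p - 1) / p) ^ p * ∫ x in halfspace, |u x| ^ p / dH x ^ p
      ≤ ∫ x in halfspace, |⟪gradient u x, gradient H (gradient dH x)⟫| ^ p := by
  set i : Fin N := ⟨N - 1, by omega⟩ with hi
  have he₀ : (EuclideanSpace.single i (1 : ℝ) : Euc N) ≠ 0 := by simp
  set c : ℝ := (H (EuclideanSpace.single i (1 : ℝ)))⁻¹ with hcdef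
  have hc : 0 < c := inv_pos.2 (hH.pos he₀)
  -- the normal vector of the boundary, scaled to have `H e = 1`
  set e : Euc N := c • EuclideanSpace.single i (1 : ℝ) with hedef
  have he : e ≠ 0 := smul_ne_zero hc.ne' he₀
  have hHe : H e = 1 := by
    rw [hedef, hH.homog, abs_of_pos hc, hcdef, inv_mul_cancel₀ (hH.pos he₀).ne']
  have hei : ∀ x : Euc N, ⟪e, x⟫ = c * x i := fun x => by
    rw [hedef, inner_smul_left, EuclideanSpace.inner_single_left]
    simp
  have hset : halfspace = {x : Euc N | 0 < ⟪e, x⟫} := by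
    rw [hhs]
    ext x
    simp only [mem_ofPred_eq, hei, mul_pos_iff_of_pos_left hc]
  have hcont : Continuous fun x : Euc N => ⟪e, x⟫ := by fun_prop
  have hopen : IsOpen {x : Euc N | 0 < ⟪e, x⟫} := isOpen_lt continuous_const hcont
  have hd : ∀ x ∈ {x : Euc N | 0 < ⟪e, x⟫}, dH x = ⟪e, x⟫ := fun x hx => by
    rw [hdH]
    refine hH.dist_eq he hHe hc hei ?_
    rw [mem_ofPred_eq, hei, mul_pos_iff_of_pos_left hc] at hx
    exact hx.le
  have hgd : ∀ x ∈ {x : Euc N | 0 < ⟪e, x⟫}, gradient dH x = e := fun x hx => by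
    refine HasGradientAt.gradient ?_
    rw [hasGradientAt_iff_hasFDerivAt]
    refine HasFDerivAt.congr_of_eventuallyEq
      ((InnerProductSpace.toDual ℝ (Euc N) e).hasFDerivAt (x := x)) ?_
    filter_upwards [hopen.mem_nhds hx] with y hy
    simp [hd y hy]
  rw [hset] at hu ⊢
  have hew : ⟪e, gradient H e⟫ = 1 := by
    rw [real_inner_comm, hH.inner_gradient_self he, hHe]
  have key := hardy_directional hp hew hu
  have hL : ∫ x in {x : Euc N | 0 < ⟪e, x⟫}, |u x| ^ p / dH x ^ p
      = ∫ x in {x : Euc N | 0 < ⟪e, x⟫}, |u x| ^ p / ⟪e, x⟫ ^ p :=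
    setIntegral_congr_fun hopen.measurableSet fun x hx => by simp only [hd x hx]
  have hR : ∫ x in {x : Euc N | 0 < ⟪e, x⟫}, |⟪gradient u x, gradient H (gradient dH x)⟫| ^ p
      = ∫ x in {x : Euc N | 0 < ⟪e, x⟫}, |⟪gradient u x, gradient H e⟫| ^ p :=
    setIntegral_congr_fun hopen.measurableSet fun x hx => by simp only [hgd x hx]
  rw [hL, hR]
  exact key
end
end
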